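/- arXiv:2005.10849 — 5 statements merged into one kernel-verified Lean document; each statement's English description precedes it below -/
import Mathlib

section
/- Let t ≥ 1 be an integer, and let G be a finite connected graph of girth at least 4t+1 and minimum degree δ. Then c(G) > (δ−1)^t / (e·t), where e is Euler's number. -/
/-!
The game of cops and robbers on a (finite connected) simple graph `G`:
first the `k` cops choose starting vertices, then the robber chooses a starting
vertex (knowing the cops' positions); the players alternate turns (cops first),
each cop may stay or move to an adjacent vertex, and the robber may stay or move
to an adjacent vertex.  The cops win if at some moment a cop occupies the same
vertex as the robber.  The cop number is the least `k` for which the cops have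
a winning strategy.
-/

variable {V : Type*}

/-- A (positional) strategy for a team of `k` cops on the graph `G`: an initial
placement, and a move function which, given the current cop positions and the
robber's position, tells each cop to stay or move to an adjacent vertex. -/
structure CopStrategy (G : SimpleGraph V) (k : ℕ) where
  init : Fin k → V
  move : (Fin k → V) → V → (Fin k → V)
  valid : ∀ c r i, move c r i = c i ∨ G.Adj (c i) (move c r i)

/-- A (positional) strategy for the robber on the graph `G` against `k` cops:
an initial placement depending on the cops' initial positions, and a move
function which, given the current cop positions and the robber's position,
makes the robber stay or move to an adjacent vertex. -/
structure RobberStrategy (G : SimpleGraph V) (k : ℕ) where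
  init : (Fin k → V) → V
  move : (Fin k → V) → V → V
  valid : ∀ c r, move c r = r ∨ G.Adj r (move c r)

/-- The sequence of game positions (cop positions, robber position) produced by a
cop strategy and a robber strategy; `play CS RS n` is the position after `n`
full rounds (a round being a cop move followed by a robber move). -/
def play {G : SimpleGraph V} {k : ℕ} (CS : CopStrategy G k) (RS : RobberStrategy G k) :
    ℕ → (Fin k → V) × V
  | 0 => (CS.init, RS.init CS.init)
  | n + 1 =>
      (CS.move (play CS RS n).1 (play CS RS n).2,
       RS.move (CS.move (play CS RS n).1 (play CS RS n).2) (play CS RS n).2)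

/-- The cops win with `k` cops if they have a strategy capturing the robber
(occupying the robber's vertex, either right after the robber's move or right
after the cops' own move) against every robber strategy. -/
def CopsWin (G : SimpleGraph V) (k : ℕ) : Prop :=
  ∃ CS : CopStrategy G k, ∀ RS : RobberStrategy G k,
    ∃ n, (∃ i, (play CS RS n).1 i = (play CS RS n).2) ∨
         (∃ i, (play CS RS (n + 1)).1 i = (play CS RS n).2)

/-- The cop number of `G`: the least number of cops having a winning strategy. -/
noncomputable def copNumber (G : SimpleGraph V) : ℕ := sInf {k | CopsWin G k}

/-!
Suppose every vertex has more than `m` neighbours. A robber who never returns at once to the vertex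
he has just left then has `m` moves to choose from. He survives as long as the total threat of the
cops lying ahead of him stays below `1`, where a cop at distance `d` threatens `q ^ ⌊d / 2⌋` if
`d < 2 * t` and does not count otherwise. Since `2 * t` is less than half the girth, a cop lies
ahead along at most one of the `m` moves. From one robber move to the next the distance to a cop
shrinks by at most two, one step of each player, which costs one factor `q`. So the threats after
the `m` moves add up to at most `1 / q` times the present threat plus `q ^ (t - 1)` for each of
the `k` cops, and if `1 + k * q ^ t ≤ m * q`, then one of the moves keeps the threat below `1`.
Taking `m * q = 1 + 1 / t` allows every `k ≤ m ^ t / (e * t)`.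
-/

open SimpleGraph

lemma exists_finset_subset_card_eq_notMem {α : Type*} {A : Set α} {m : ℕ}
    (hA : (m : ℕ∞) < A.encard) (a : α) : ∃ S : Finset α, ↑S ⊆ A ∧ a ∉ S ∧ S.card = m := by
  have hle : (m : ℕ∞) ≤ (A \ {a}).encard :=
    (ENat.le_sub_of_add_le_right (by simp) (Order.add_one_le_of_lt hA)).trans
      (A.encard_tsub_one_le_encard_sdiff_singleton a)
  obtain ⟨B, hBA, hB⟩ := Set.exists_subset_encard_eq hle
  lift B to Finset α using Set.finite_of_encard_eq_coe hB
  exact ⟨B, fun b hb ↦ (hBA hb).1, fun ha ↦ (hBA ha).2 rfl, by simpa using hB⟩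

section Geodesics

variable {G : SimpleGraph V} {p r x y c c' : V}

lemma eq_of_isPath_of_length_add_length_lt_egirth {p q : G.Walk x y} (hp : p.IsPath)
    (hq : q.IsPath) (hg : ((p.length + q.length : ℕ) : ℕ∞) < G.egirth) : p = q := by
  by_contra hne
  obtain ⟨_, -, -, C, hC, hlen⟩ := hp.exists_isCycle_length_le_add_of_ne hq hne
  exact (egirth_le_length hC).not_gt (hg.trans_le' (by exact_mod_cast hlen))

lemma dist_ne_dist_of_adj (hpr : G.Adj p r) (hrc : G.Reachable r c)
    (hg : ((2 * G.dist r c + 1 : ℕ) : ℕ∞) < G.egirth) : G.dist p c ≠ G.dist r c := by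
  classical
  intro heq
  obtain ⟨P, hP, hPlen⟩ := (hpr.reachable.trans hrc).exists_path_of_dist
  obtain ⟨R, hR, hRlen⟩ := hrc.exists_path_of_dist
  have hpR : p ∉ R.support := fun hp ↦ by
    have hlt := R.length_dropUntil_lt_length hp hpr.ne
    have hle := dist_le (R.dropUntil p hp)
    lia
  have hcons : Walk.cons hpr R = P := by
    refine eq_of_isPath_of_length_add_length_lt_egirth (hR.cons hpR) hP ?_
    rwa [Walk.length_cons, hPlen, hRlen, heq, show ∀ n, n + 1 + n = 2 * n + 1 by lia]
  have hlen := congrArg Walk.length hcons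
  rw [Walk.length_cons] at hlen
  lia

lemma dist_le_dist_add_one_of_adj_right (hxy : G.Adj x y) (p : V) :
    G.dist p y ≤ G.dist p x + 1 := by
  have hdiff := hxy.diff_dist_adj (u := p)
  lia

lemma dist_le_dist_add_one_of_adj_left (hxy : G.Adj x y) (c : V) :
    G.dist x c ≤ G.dist y c + 1 := by
  rw [G.dist_comm (u := x), G.dist_comm (u := y)]
  exact dist_le_dist_add_one_of_adj_right hxy.symm c

lemma getVert_succ_eq_or_adj {x y : V} (w : G.Walk x y) (n : ℕ) :
    w.getVert (n + 1) = w.getVert n ∨ G.Adj (w.getVert n) (w.getVert (n + 1)) := by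
  rcases lt_or_ge n w.length with hn | hn
  · exact .inr (w.adj_getVert_succ hn)
  · left
    rw [w.getVert_of_length_le hn, w.getVert_of_length_le (hn.trans n.le_succ)]

/-- `p`, `r` are the first two vertices of a geodesic from `p` to `c`. As `dist` is `0` between
different components, this entails that `c` can be reached from `p`. -/
structure IsStepToward (G : SimpleGraph V) (p r c : V) : Prop where
  adj : G.Adj p r
  dist_eq : G.dist p c = G.dist r c + 1

lemma exists_isStepToward (hpc : G.Reachable p c) (hne : p ≠ c) : ∃ x, IsStepToward G p x c := by
  obtain ⟨w, hw⟩ := hpc.exists_walk_length_eq_dist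
  cases w with
  | nil => exact (hne rfl).elim
  | @cons _ x _ hpx w =>
    have hle := dist_le w
    have hge := dist_le_dist_add_one_of_adj_left hpx c
    rw [Walk.length_cons] at hw
    exact ⟨x, hpx, by lia⟩

lemma isStepToward_or_isStepToward_of_adj (hpr : G.Adj p r) (hrc : G.Reachable r c)
    (hg : ((2 * G.dist r c + 1 : ℕ) : ℕ∞) < G.egirth) :
    IsStepToward G p r c ∨ IsStepToward G r p c := by
  have hne := dist_ne_dist_of_adj hpr hrc hg
  have hpr_le := dist_le_dist_add_one_of_adj_left hpr c
  have hrp_le := dist_le_dist_add_one_of_adj_left hpr.symm c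
  rcases hne.lt_or_gt with hlt | hgt
  · exact .inr ⟨hpr.symm, by lia⟩
  · exact .inl ⟨hpr, by lia⟩

namespace IsStepToward

lemma reachable (h : IsStepToward G p r c) : G.Reachable p c :=
  .of_dist_ne_zero (by simp [h.dist_eq])

lemma unique (hx : IsStepToward G p x c) (hy : IsStepToward G p y c)
    (hg : ((2 * G.dist p c : ℕ) : ℕ∞) < G.egirth) : x = y := by
  have exists_geodesic {z} (hz : IsStepToward G p z c) :
      ∃ w : G.Walk p c, w.IsPath ∧ w.length = G.dist p c ∧ w.snd = z := by
    obtain ⟨w, hw⟩ := (hz.adj.symm.reachable.trans hz.reachable).exists_walk_length_eq_dist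
    have hlen : (w.cons hz.adj).length = G.dist p c := by rw [Walk.length_cons, hw, hz.dist_eq]
    exact ⟨w.cons hz.adj, Walk.isPath_of_length_eq_dist _ hlen, hlen, Walk.snd_cons ..⟩
  obtain ⟨wx, hwx, hlenx, rfl⟩ := exists_geodesic hx
  obtain ⟨wy, hwy, hleny, rfl⟩ := exists_geodesic hy
  rw [eq_of_isPath_of_length_add_length_lt_egirth hwx hwy (by rwa [hlenx, hleny, ← two_mul])]

lemma of_adj_right (h : IsStepToward G p r c') (hcc' : G.Adj c c') (hpc : p ≠ c)
    (hg : ((2 * G.dist p c' + 1 : ℕ) : ℕ∞) < G.egirth) : IsStepToward G p r c := by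
  have hpr := h.dist_eq
  have hdist : G.dist p c = G.dist p c' + 1 ∨ G.dist p c' = G.dist p c + 1 := by
    rw [G.dist_comm (u := p) (v := c')] at hg ⊢
    rw [G.dist_comm (u := p) (v := c)]
    exact (isStepToward_or_isStepToward_of_adj hcc' h.reachable.symm hg).imp dist_eq dist_eq
  rcases hdist with hfarther | hcloser
  · have hrc := dist_le_dist_add_one_of_adj_right hcc'.symm r
    have hpr_le := dist_le_dist_add_one_of_adj_left h.adj c
    exact ⟨h.adj, by lia⟩
  · obtain ⟨x, hx⟩ := exists_isStepToward (h.reachable.trans hcc'.symm.reachable) hpc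
    have hpx := hx.dist_eq
    have hxc' := dist_le_dist_add_one_of_adj_right hcc' x
    have hpc' := dist_le_dist_add_one_of_adj_left hx.adj c'
    have hx' : IsStepToward G p x c' := ⟨hx.adj, by lia⟩
    rwa [h.unique hx' (hg.trans_le' (by exact_mod_cast Nat.le_succ _))]

end IsStepToward

end Geodesics

section Threat

open Classical in
/-- The threat that a cop at `c` poses to a robber who has just moved from `p` to `r`: a power of
`q` that decreases with the distance if the cop is ahead of the robber and in sight. The cop's
position counts as `s` steps further away; `s` is `0` before the cops' move and `1` after it,
which compensates for the approach the cop may have made. -/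
noncomputable def threat (G : SimpleGraph V) (q : ℝ) (t s : ℕ) (p r c : V) : ℝ :=
  if IsStepToward G p r c ∧ G.dist r c + s < 2 * t then q ^ ((G.dist r c + s) / 2) else 0

variable {G : SimpleGraph V} {q : ℝ} {t s : ℕ} {p r c c' : V}

lemma threat_eq_pow (hstep : IsStepToward G p r c) (hnear : G.dist r c + s < 2 * t) :
    threat G q t s p r c = q ^ ((G.dist r c + s) / 2) :=
  if_pos ⟨hstep, hnear⟩

lemma isStepToward_and_lt_of_threat_ne_zero (h : threat G q t s p r c ≠ 0) :
    IsStepToward G p r c ∧ G.dist r c + s < 2 * t := by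
  by_contra hnot
  exact h (if_neg hnot)

lemma threat_nonneg (hq : 0 ≤ q) : 0 ≤ threat G q t s p r c := by
  unfold threat
  split_ifs <;> positivity

lemma threat_self (hpr : G.Adj p r) (ht : 1 ≤ t) (hs : s ≤ 1) : threat G q t s p r r = 1 := by
  have hstep : IsStepToward G p r r := ⟨hpr, by simp [hpr]⟩
  have hexp : s / 2 = 0 := by lia
  rw [threat_eq_pow hstep (by rw [dist_self]; lia), dist_self, zero_add, hexp, pow_zero]

lemma threat_one_le_threat_zero_of_move (hq : q ∈ Set.Icc 0 1)
    (hg : ((4 * t + 1 : ℕ) : ℕ∞) ≤ G.egirth) (hcc' : c' = c ∨ G.Adj c c') (hpc : p ≠ c) :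
    threat G q t 1 p r c' ≤ threat G q t 0 p r c := by
  by_cases hzero : threat G q t 1 p r c' = 0
  · rw [hzero]
    exact threat_nonneg hq.1
  obtain ⟨hstep', hnear⟩ := isStepToward_and_lt_of_threat_ne_zero hzero
  have hstep : IsStepToward G p r c := by
    rcases hcc' with rfl | hadj
    · exact hstep'
    · refine hstep'.of_adj_right hadj hpc (hg.trans_lt' ?_)
      rw [hstep'.dist_eq]
      exact_mod_cast by lia
  have hdist : G.dist r c ≤ G.dist r c' + 1 := by
    rcases hcc' with rfl | hadj
    · lia
    · exact dist_le_dist_add_one_of_adj_right hadj.symm r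
  rw [threat_eq_pow hstep' hnear, threat_eq_pow hstep (by lia)]
  exact pow_le_pow_of_le_one hq.1 hq.2 (by lia)

lemma mul_threat_zero_le_of_ne {x : V} (hq : 0 ≤ q) (hg : ((4 * t + 1 : ℕ) : ℕ∞) ≤ G.egirth)
    (hpr : G.Adj p r) (hxp : x ≠ p) :
    q * threat G q t 0 r x c ≤ threat G q t 1 p r c + q ^ t := by
  have hnonneg : 0 ≤ threat G q t 1 p r c := threat_nonneg hq
  by_cases hzero : threat G q t 0 r x c = 0
  · rw [hzero, mul_zero]
    positivity
  obtain ⟨hstep, hnear⟩ := isStepToward_and_lt_of_threat_ne_zero hzero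
  have hdist := hstep.dist_eq
  rw [threat_eq_pow hstep hnear, ← pow_succ']
  by_cases hfar : G.dist r c + 1 < 2 * t
  · have hne : ¬IsStepToward G r p c := fun h ↦
      hxp (hstep.unique h (hg.trans_lt' (by exact_mod_cast by lia)))
    have hstep' : IsStepToward G p r c :=
      (isStepToward_or_isStepToward_of_adj hpr hstep.reachable
        (hg.trans_lt' (by exact_mod_cast by lia))).resolve_right hne
    have hexp : (G.dist x c + 0) / 2 + 1 = (G.dist r c + 1) / 2 := by lia
    rw [threat_eq_pow hstep' hfar, hexp]
    exact le_add_of_nonneg_right (by positivity)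
  · have hexp : (G.dist x c + 0) / 2 + 1 = t := by lia
    rw [hexp]
    exact le_add_of_nonneg_left hnonneg

lemma mul_sum_threat_zero_le {S : Finset V} (hq : 0 ≤ q)
    (hg : ((4 * t + 1 : ℕ) : ℕ∞) ≤ G.egirth) (hpr : G.Adj p r) (hpS : p ∉ S) :
    q * ∑ x ∈ S, threat G q t 0 r x c ≤ threat G q t 1 p r c + q ^ t := by
  by_cases hthreat : ∃ x ∈ S, threat G q t 0 r x c ≠ 0
  · obtain ⟨x, hxS, hx⟩ := hthreat
    obtain ⟨hstep, hnear⟩ := isStepToward_and_lt_of_threat_ne_zero hx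
    have hg' : ((2 * G.dist r c : ℕ) : ℕ∞) < G.egirth := by
      rw [hstep.dist_eq]
      exact hg.trans_lt' (by exact_mod_cast by lia)
    have huniq y (_ : y ∈ S) (hyx : y ≠ x) : threat G q t 0 r y c = 0 := by
      by_contra hy
      exact hyx ((isStepToward_and_lt_of_threat_ne_zero hy).1.unique hstep hg')
    rw [Finset.sum_eq_single_of_mem x hxS huniq]
    exact mul_threat_zero_le_of_ne hq hg hpr (ne_of_mem_of_not_mem hxS hpS)
  · push Not at hthreat
    rw [Finset.sum_eq_zero hthreat, mul_zero]
    exact add_nonneg (threat_nonneg hq) (by positivity)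

end Threat

section Robber

/-- `c'` arises from the cop positions `c` by a legal move of the team of cops. -/
def IsCopMove {ι : Type*} (G : SimpleGraph V) (c c' : ι → V) : Prop :=
  ∀ i, c' i = c i ∨ G.Adj (c i) (c' i)

/-- The robber at `r`, with the cops at `c` to move, can have come from a cop-free vertex in such
a way that the total threat is below `1`. This is the invariant of the robber's strategy. -/
def IsSafe {ι : Type*} [Fintype ι] (G : SimpleGraph V) (q : ℝ) (t : ℕ) (c : ι → V) (r : V) :
    Prop :=
  ∃ p, G.Adj p r ∧ (∀ i, c i ≠ p) ∧ ∑ i, threat G q t 0 p r (c i) < 1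

variable {ι : Type*} [Fintype ι] {G : SimpleGraph V} {q : ℝ} {t s m : ℕ} {c c' : ι → V} {p r : V}

lemma ne_of_sum_threat_lt_one (hq : 0 ≤ q) (ht : 1 ≤ t) (hs : s ≤ 1) (hpr : G.Adj p r)
    (hlt : ∑ i, threat G q t s p r (c i) < 1) (i : ι) : c i ≠ r := by
  rintro rfl
  have hle := Finset.single_le_sum (f := fun j ↦ threat G q t s p (c i) (c j))
    (fun _ _ ↦ threat_nonneg hq) (Finset.mem_univ i)
  rw [threat_self hpr ht hs] at hle
  exact hle.not_gt hlt

lemma IsSafe.ne (hq : 0 ≤ q) (ht : 1 ≤ t) (h : IsSafe G q t c r) (i : ι) : c i ≠ r := by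
  obtain ⟨p, hpr, -, hlt⟩ := h
  exact ne_of_sum_threat_lt_one hq ht zero_le_one hpr hlt i

lemma exists_sum_threat_zero_lt_one {S : Finset V} (hq : 0 ≤ q)
    (hqS : 1 + Fintype.card ι * q ^ t ≤ S.card * q) (hg : ((4 * t + 1 : ℕ) : ℕ∞) ≤ G.egirth)
    (hpr : G.Adj p r) (hpS : p ∉ S) (hlt : ∑ i, threat G q t 1 p r (c i) < 1) :
    ∃ x ∈ S, ∑ i, threat G q t 0 r x (c i) < 1 := by
  by_contra! hge
  have hle : (S.card : ℝ) * q < S.card * q := calc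
    (S.card : ℝ) * q ≤ q * ∑ x ∈ S, ∑ i, threat G q t 0 r x (c i) := by
      rw [mul_comm]
      exact mul_le_mul_of_nonneg_left (by simpa using S.card_nsmul_le_sum _ 1 hge) hq
    _ = ∑ i, q * ∑ x ∈ S, threat G q t 0 r x (c i) := by rw [Finset.sum_comm, Finset.mul_sum]
    _ ≤ ∑ i, (threat G q t 1 p r (c i) + q ^ t) :=
      Finset.sum_le_sum fun _ _ ↦ mul_sum_threat_zero_le hq hg hpr hpS
    _ = ∑ i, threat G q t 1 p r (c i) + Fintype.card ι * q ^ t := by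
      simp [Finset.sum_add_distrib]
    _ < S.card * q := by linarith
  exact hle.false

lemma IsSafe.exists_move (hq : q ∈ Set.Icc 0 1) (hqm : 1 + Fintype.card ι * q ^ t ≤ m * q)
    (ht : 1 ≤ t) (hg : ((4 * t + 1 : ℕ) : ℕ∞) ≤ G.egirth)
    (hm : ∀ v, (m : ℕ∞) < (G.neighborSet v).encard) (h : IsSafe G q t c r)
    (hmove : IsCopMove G c c') : (∀ i, c' i ≠ r) ∧ ∃ x, G.Adj r x ∧ IsSafe G q t c' x := by
  obtain ⟨p, hpr, hpc, hlt⟩ := h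
  have hlt' : ∑ i, threat G q t 1 p r (c' i) < 1 := hlt.trans_le' <| Finset.sum_le_sum fun i _ ↦
    threat_one_le_threat_zero_of_move hq hg (hmove i) (hpc i).symm
  have hfree := ne_of_sum_threat_lt_one hq.1 ht le_rfl hpr hlt'
  obtain ⟨S, hSr, hpS, rfl⟩ := exists_finset_subset_card_eq_notMem (hm r) p
  obtain ⟨x, hxS, hx⟩ := exists_sum_threat_zero_lt_one hq.1 hqm hg hpr hpS hlt'
  exact ⟨hfree, x, hSr hxS, r, hSr hxS, hfree, hx⟩

lemma exists_isSafe_of_eq_or_not_reachable (hm : ∀ v, 1 < (G.neighborSet v).encard) {u : V}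
    (hc : ∀ i, c i = u ∨ ¬G.Reachable u (c i)) : ∃ r, IsSafe G q t c r := by
  obtain ⟨p, hup, -⟩ := Set.exists_ne_of_one_lt_encard (hm u) u
  obtain ⟨r, hpr, hru⟩ := Set.exists_ne_of_one_lt_encard (hm p) u
  rw [mem_neighborSet] at hup hpr
  refine ⟨r, p, hpr, fun i hcp ↦ ?_, ?_⟩
  · rcases hc i with h | h
    · exact hup.ne (h.symm.trans hcp)
    · exact h (hcp ▸ hup.reachable)
  · have hzero i (_ : i ∈ Finset.univ) : threat G q t 0 p r (c i) = 0 := by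
      by_contra hthreat
      have hstep := (isStepToward_and_lt_of_threat_ne_zero hthreat).1
      rcases hc i with h | h
      · have hdist := hstep.dist_eq
        have hpos := (hpr.symm.reachable.trans hup.symm.reachable).pos_dist_of_ne hru
        rw [h, dist_eq_one_iff_adj.2 hup.symm] at hdist
        lia
      · exact h (hup.reachable.trans hstep.reachable)
    rw [Finset.sum_eq_zero hzero]
    exact zero_lt_one

/-- The robber starts when all cops able to reach him stand on one vertex, and dodges them while
they walk from there to their places. -/
lemma exists_isSafe [Nonempty V] (hq : q ∈ Set.Icc 0 1)
    (hqm : 1 + Fintype.card ι * q ^ t ≤ m * q) (ht : 1 ≤ t)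
    (hg : ((4 * t + 1 : ℕ) : ℕ∞) ≤ G.egirth)
    (hm : ∀ v, (m : ℕ∞) < (G.neighborSet v).encard) (c : ι → V) : ∃ r, IsSafe G q t c r := by
  classical
  have hm0 : 0 < m := by
    have hpos : 0 < m * q := hqm.trans_lt' (by have := hq.1; positivity)
    exact_mod_cast pos_of_mul_pos_left hpos hq.1
  have hm1 v : 1 < (G.neighborSet v).encard := (hm v).trans_le' (by exact_mod_cast hm0)
  let u : V := Classical.arbitrary V
  have hwalk i : ∃ a, (a = u ∨ ¬G.Reachable u a) ∧ Nonempty (G.Walk a (c i)) := by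
    by_cases h : G.Reachable u (c i)
    · exact ⟨u, .inl rfl, h⟩
    · exact ⟨c i, .inr h, ⟨.nil⟩⟩
  choose a ha w using hwalk
  replace w i := (w i).some
  have hsafe n : ∃ r, IsSafe G q t (fun i ↦ (w i).getVert n) r := by
    induction n with
    | zero => exact exists_isSafe_of_eq_or_not_reachable hm1 (by simpa using ha)
    | succ n ih =>
      obtain ⟨r, hr⟩ := ih
      obtain ⟨-, x, -, hx⟩ := hr.exists_move hq hqm ht hg hm fun i ↦
        getVert_succ_eq_or_adj (w i) n
      exact ⟨x, hx⟩
  obtain ⟨r, hr⟩ := hsafe (Finset.univ.sup fun i ↦ (w i).length)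
  refine ⟨r, ?_⟩
  convert hr using 2 with i
  exact ((w i).getVert_of_length_le (Finset.le_sup (f := fun i ↦ (w i).length) (by simp))).symm

end Robber

section Game

variable {G : SimpleGraph V} {k : ℕ}

lemma not_copsWin_of_invariant {I : (Fin k → V) → V → Prop} (hinit : ∀ c, ∃ r, I c r)
    (hfree : ∀ c r, I c r → ∀ i, c i ≠ r)
    (hmove : ∀ c c' r, I c r → IsCopMove G c c' →
      (∀ i, c' i ≠ r) ∧ ∃ x, (x = r ∨ G.Adj r x) ∧ I c' x) : ¬CopsWin G k := by
  classical
  rintro ⟨CS, hCS⟩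
  choose start hstart using hinit
  let RS : RobberStrategy G k :=
    { init := start
      move c r := if h : ∃ x, (x = r ∨ G.Adj r x) ∧ I c x then h.choose else r
      valid c r := by
        split_ifs with h
        · exact h.choose_spec.1
        · exact .inl rfl }
  have hround n (hn : I (play CS RS n).1 (play CS RS n).2) :=
    hmove _ (play CS RS (n + 1)).1 _ hn fun i ↦ CS.valid _ _ i
  have hplay n : I (play CS RS n).1 (play CS RS n).2 := by
    induction n with
    | zero => exact hstart _
    | succ n ih =>
      have hx := (hround n ih).2
      have hrobber : (play CS RS (n + 1)).2 = hx.choose := dif_pos hx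
      exact hrobber ▸ hx.choose_spec.2
  obtain ⟨n, ⟨i, hi⟩ | ⟨i, hi⟩⟩ := hCS RS
  · exact hfree _ _ (hplay n) i hi
  · exact (hround n (hplay n)).1 i hi

lemma CopsWin.pos [Nonempty V] (h : CopsWin G k) : 0 < k := by
  refine Nat.pos_of_ne_zero ?_
  rintro rfl
  obtain ⟨CS, hCS⟩ := h
  obtain ⟨v⟩ := ‹Nonempty V›
  obtain ⟨n, ⟨i, -⟩ | ⟨i, -⟩⟩ := hCS ⟨fun _ ↦ v, fun _ r ↦ r, fun _ _ ↦ .inl rfl⟩ <;>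
    exact i.elim0

lemma copsWin_card [Finite V] (G : SimpleGraph V) : CopsWin G (Nat.card V) := by
  let CS : CopStrategy G (Nat.card V) :=
    ⟨(Finite.equivFin V).symm, fun c _ ↦ c, fun _ _ _ ↦ .inl rfl⟩
  exact ⟨CS, fun RS ↦ ⟨0, .inl ((Finite.equivFin V).symm.surjective (RS.init CS.init))⟩⟩

lemma copsWin_copNumber [Finite V] (G : SimpleGraph V) : CopsWin G (copNumber G) :=
  Nat.sInf_mem (s := {k | CopsWin G k}) ⟨_, copsWin_card G⟩

lemma minDegree_le_encard_neighborSet [Fintype V] [DecidableRel G.Adj] (v : V) :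
    (G.minDegree : ℕ∞) ≤ (G.neighborSet v).encard := by
  rw [← coe_neighborFinset, Set.encard_coe_eq_coe_finsetCard, card_neighborFinset_eq_degree]
  exact_mod_cast G.minDegree_le_degree v

end Game

lemma exists_mem_Icc_one_add_mul_pow_le {t : ℕ} {m k : ℝ} (ht : 1 ≤ t) (hm : 2 ≤ m)
    (hk : k ≤ m ^ t / (Real.exp 1 * t)) : ∃ q ∈ Set.Icc (0 : ℝ) 1, 1 + k * q ^ t ≤ m * q := by
  have ht0 : (1 : ℝ) ≤ t := by exact_mod_cast ht
  have hinv : (t : ℝ)⁻¹ ≤ 1 := inv_le_one_of_one_le₀ ht0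
  refine ⟨(1 + (t : ℝ)⁻¹) / m, ⟨by positivity, ?_⟩, ?_⟩
  · rw [div_le_one (by positivity)]
    linarith
  · calc 1 + k * ((1 + (t : ℝ)⁻¹) / m) ^ t
      _ ≤ 1 + m ^ t / (Real.exp 1 * t) * (Real.exp 1 / m ^ t) := by
        rw [div_pow]
        gcongr
        exact Real.one_add_inv_pow_le_exp
      _ = 1 + (t : ℝ)⁻¹ := by field_simp
      _ = m * ((1 + (t : ℝ)⁻¹) / m) := by field_simp

lemma div_exp_mul_lt_one_of_le_one {x t : ℝ} (hx : x ≤ 1) (ht : 1 ≤ t) :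
    x / (Real.exp 1 * t) < 1 := by
  have he : 1 < Real.exp 1 := Real.one_lt_exp_iff.2 one_pos
  rw [div_lt_one (by positivity)]
  nlinarith

lemma div_exp_mul_lt_of_copsWin [Nonempty V] {G : SimpleGraph V} {t m k : ℕ}
    (ht : 1 ≤ t) (hm : 2 ≤ m) (hg : ((4 * t + 1 : ℕ) : ℕ∞) ≤ G.egirth)
    (hdeg : ∀ v, (m : ℕ∞) < (G.neighborSet v).encard) (hk : CopsWin G k) :
    (m : ℝ) ^ t / (Real.exp 1 * t) < k := by
  by_contra! hle
  obtain ⟨q, hq, hqm⟩ := exists_mem_Icc_one_add_mul_pow_le ht (by exact_mod_cast hm) hle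
  have hcard : 1 + Fintype.card (Fin k) * q ^ t ≤ m * q := by rwa [Fintype.card_fin]
  refine not_copsWin_of_invariant (exists_isSafe hq hcard ht hg hdeg)
    (fun _ _ h ↦ h.ne hq.1 ht) (fun _ _ _ h hmove ↦ ?_) hk
  obtain ⟨hfree, x, hx, hsafe⟩ := h.exists_move hq hcard ht hg hdeg hmove
  exact ⟨hfree, x, .inr hx, hsafe⟩

theorem copNumber_gt_of_girth_ge_general [Nonempty V] (G : SimpleGraph V) {t d k : ℕ}
    (ht : 1 ≤ t) (hgirth : ((4 * t + 1 : ℕ) : ℕ∞) ≤ G.egirth)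
    (hdeg : ∀ v, (d : ℕ∞) ≤ (G.neighborSet v).encard) (hk : CopsWin G k) :
    ((d : ℝ) - 1) ^ t / (Real.exp 1 * t) < k := by
  rcases lt_or_ge d 3 with hd | hd
  · have hd' : |(d : ℝ) - 1| ≤ 1 := by
      rw [abs_le]
      constructor <;> interval_cases d <;> norm_num
    have hpow : ((d : ℝ) - 1) ^ t ≤ 1 := by
      refine (le_abs_self _).trans ?_
      rw [abs_pow]
      exact pow_le_one₀ (abs_nonneg _) hd'
    have hlt := div_exp_mul_lt_one_of_le_one hpow (Nat.one_le_cast.2 ht)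
    exact hlt.trans_le (by exact_mod_cast hk.pos)
  · obtain ⟨m, rfl⟩ := Nat.exists_eq_add_of_le' (Nat.one_le_of_lt hd)
    rw [Nat.cast_add_one, add_sub_cancel_right]
    refine div_exp_mul_lt_of_copsWin ht (by lia) hgirth (fun v ↦ ?_) hk
    exact (hdeg v).trans_lt' (by exact_mod_cast m.lt_succ_self)

/-- If `t ≥ 1` and `G` is a finite connected graph of girth at
least `4t + 1` and minimum degree `δ`, then `c(G) > (δ - 1) ^ t / (e * t)`. -/
theorem copNumber_gt_of_girth_ge [Fintype V] (G : SimpleGraph V) [DecidableRel G.Adj]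
    (hconn : G.Connected) (t : ℕ) (ht : 1 ≤ t)
    (hgirth : ((4 * t + 1 : ℕ) : ℕ∞) ≤ G.egirth) :
    ((G.minDegree : ℝ) - 1) ^ t / (Real.exp 1 * t) < (copNumber G : ℝ) := by
  have := hconn.nonempty
  exact copNumber_gt_of_girth_ge_general G ht hgirth minDegree_le_encard_neighborSet
    (copsWin_copNumber G)
end

section
/- Every finite connected graph G with finite girth g and minimum degree δ has cop number c(G) ≥ (1/g)·(δ−1)^{⌊(g−1)/4⌋}. -/
/-!
The game of cops and robbers on a (finite connected) simple graph `G`: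
first the `k` cops choose starting vertices, then the robber chooses a starting
vertex (knowing the cops' positions); the players alternate turns (cops first),
each cop may stay or move to an adjacent vertex, and the robber may stay or move
to an adjacent vertex.  The cops win if at some moment a cop occupies the same
vertex as the robber.  The cop number is the least `k` for which the cops have
a winning strategy.
-/

variable {V : Type*}

/-!
The robber never backtracks and keeps an exponentially weighted count of the cops in front of him
small. Below half the girth the graph looks like a tree from every cop, so a cop within distance
`2 * t` is in front of the robber for at most one choice of his next vertex, and one round brings
the two at most two steps closer. Giving weight `b ^ (t - d / 2)` to a cop in front at distance `d`,
the weights after one round, summed over the robber's possible moves, are thus at most `b` times the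
old total plus `b` for every cop that newly comes into range. As the robber has at least `q` moves,
he can keep the total below `b ^ t`, the weight of a cop about to catch him, provided that
`b * (b ^ t + k) < q * b ^ t`; the same inequality, applied to the infimum of the total over all
positions of the robber, gives him a start with total below `b ^ t`. With `b = q * t / (t + 1)` the
condition reads `t * k < b ^ t`, and `(1 + 1 / t) ^ t ≤ e` shows that it holds if
`e * t * k < q ^ t`.
-/

namespace CopsAndRobbers

open SimpleGraph

section Geodesics

variable {G : SimpleGraph V} {c u v w : V} {n : ℕ}

lemma dist_le_dist_add_one_of_adj (h : G.Adj v w) : G.dist u v ≤ G.dist u w + 1 := by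
  have := h.diff_dist_adj (u := u)
  omega

lemma egirth_le_length_add_length {p q : G.Walk u v} (hp : p.IsPath) (hq : q.IsPath)
    (hpq : p ≠ q) : G.egirth ≤ (p.length + q.length : ℕ) := by
  obtain ⟨_, _, _, cycle, hcycle, hlength⟩ := hp.exists_isCycle_length_le_add_of_ne hq hpq
  exact (egirth_le_length hcycle).trans (by exact_mod_cast hlength)

lemma eq_of_adj_of_dist_eq_add_one (hn : (n : ℕ∞) < G.egirth) (hu : G.Adj v u) (hw : G.Adj v w)
    (hdu : G.dist v c = G.dist u c + 1) (hdw : G.dist v c = G.dist w c + 1)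
    (hv : 2 * G.dist v c ≤ n) : u = w := by
  have hvc : G.Reachable v c := .of_dist_ne_zero (by omega)
  obtain ⟨p, hp⟩ := (hu.symm.reachable.trans hvc).exists_walk_length_eq_dist
  obtain ⟨q, hq⟩ := (hw.symm.reachable.trans hvc).exists_walk_length_eq_dist
  have hup : (Walk.cons hu p).length = G.dist v c := by rw [Walk.length_cons, hp, hdu]
  have hwq : (Walk.cons hw q).length = G.dist v c := by rw [Walk.length_cons, hq, hdw]
  by_contra huw
  have hne : Walk.cons hu p ≠ Walk.cons hw q := fun h ↦ huw <| by
    simpa only [Walk.snd_cons] using congrArg Walk.snd h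
  have hshort := egirth_le_length_add_length (Walk.isPath_of_length_eq_dist _ hup)
    (Walk.isPath_of_length_eq_dist _ hwq) hne
  have : n < 2 * G.dist v c := by
    rw [two_mul]
    exact_mod_cast hup ▸ hwq ▸ hn.trans_le hshort
  omega

lemma dist_ne_dist_of_adj (hn : (n : ℕ∞) < G.egirth) (hvc : G.Reachable v c) (hvw : G.Adj v w)
    (hv : 2 * G.dist v c + 1 ≤ n) : G.dist v c ≠ G.dist w c := by
  classical
  intro heq
  obtain ⟨p, hp⟩ := hvc.exists_walk_length_eq_dist
  obtain ⟨q, hq⟩ := (hvw.symm.reachable.trans hvc).exists_walk_length_eq_dist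
  have hvq : v ∉ q.support := by
    intro hmem
    have hsplit := congrArg Walk.length (q.take_spec hmem)
    rw [Walk.length_append] at hsplit
    have hdrop := dist_le (q.dropUntil v hmem)
    exact hvw.ne (Walk.eq_of_length_eq_zero (p := q.takeUntil v hmem) (by omega)).symm
  have hpath : (Walk.cons hvw q).IsPath :=
    (Walk.cons_isPath_iff _ _).2 ⟨q.isPath_of_length_eq_dist hq, hvq⟩
  have hne : p ≠ Walk.cons hvw q := fun h ↦ by
    have := congrArg Walk.length h
    rw [Walk.length_cons] at this
    omega
  have hshort := hn.trans_le
    (egirth_le_length_add_length (p.isPath_of_length_eq_dist hp) hpath hne)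
  rw [Walk.length_cons] at hshort
  have : n < p.length + (q.length + 1) := by exact_mod_cast hshort
  omega

lemma dist_eq_add_one_of_ne (hn : (n : ℕ∞) < G.egirth) (hu : G.Adj v u) (hw : G.Adj v w)
    (huw : u ≠ w) (hdu : G.dist v c = G.dist u c + 1) (hv : 2 * G.dist v c + 1 ≤ n) :
    G.dist w c = G.dist v c + 1 := by
  have hlevel := dist_ne_dist_of_adj hn (.of_dist_ne_zero (by omega)) hw hv
  have hparent : G.dist v c ≠ G.dist w c + 1 := fun hdw ↦
    huw (eq_of_adj_of_dist_eq_add_one hn hu hw hdu hdw (by omega))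
  have := hw.diff_dist_adj (u := c)
  simp only [G.dist_comm (u := c)] at this
  omega

end Geodesics

section Game

variable {G : SimpleGraph V} {k : ℕ}

/-- `CopMove G c c'`: a team of cops at `c` can be at `c'` after one turn. -/
def CopMove (G : SimpleGraph V) (c c' : Fin k → V) : Prop :=
  ∀ i, c' i = c i ∨ G.Adj (c i) (c' i)

lemma CopMove.refl (c : Fin k → V) : CopMove G c c := fun _ ↦ .inl rfl

lemma not_copsWin_of_invariant (Safe : (Fin k → V) → V → Prop) (hinit : ∀ c, ∃ r, Safe c r)
    (hfree : ∀ c c' r, CopMove G c c' → Safe c r → ∀ i, c' i ≠ r)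
    (hmove : ∀ c c' r, CopMove G c c' → Safe c r → ∃ r', (r' = r ∨ G.Adj r r') ∧ Safe c' r') :
    ¬ CopsWin G k := by
  rintro ⟨CS, hCS⟩
  have hreply : ∀ c' r, ∃ r', (r' = r ∨ G.Adj r r') ∧
      ∀ c, CopMove G c c' → Safe c r → Safe c' r' := by
    intro c' r
    by_cases h : ∃ c, CopMove G c c' ∧ Safe c r
    · obtain ⟨c, hc, hsafe⟩ := h
      obtain ⟨r', hr', hsafe'⟩ := hmove c c' r hc hsafe
      exact ⟨r', hr', fun _ _ _ ↦ hsafe'⟩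
    · exact ⟨r, .inl rfl, fun c hc hsafe ↦ absurd ⟨c, hc, hsafe⟩ h⟩
  choose start hstart using hinit
  choose reply hvalid hsafe using hreply
  let RS : RobberStrategy G k := ⟨start, reply, hvalid⟩
  have hinv : ∀ n, Safe (play CS RS n).1 (play CS RS n).2 := by
    intro n
    induction n with
    | zero => exact hstart _
    | succ n ih => exact hsafe _ _ _ (CS.valid _ _) ih
  obtain ⟨n, ⟨i, hi⟩ | ⟨i, hi⟩⟩ := hCS RS
  · exact hfree _ _ _ (.refl _) (hinv n) i hi
  · exact hfree _ _ _ (CS.valid _ _) (hinv n) i hi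

lemma pos_of_copsWin [Nonempty V] (h : CopsWin G k) : 0 < k := by
  refine Nat.pos_of_ne_zero fun hk ↦ ?_
  subst hk
  refine not_copsWin_of_invariant (fun _ _ ↦ True) (fun _ ↦ ?_) (fun _ _ _ _ _ i ↦ i.elim0)
    (fun _ _ r _ _ ↦ ⟨r, .inl rfl, trivial⟩) h
  exact ⟨Classical.arbitrary V, trivial⟩

lemma copsWin_natCard [Finite V] (G : SimpleGraph V) : CopsWin G (Nat.card V) := by
  let place := Finite.equivFin V
  refine ⟨⟨place.symm, fun c _ ↦ c, fun c _ ↦ CopMove.refl c⟩, fun RS ↦ ?_⟩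
  exact ⟨0, .inl ⟨place (RS.init place.symm), place.symm_apply_apply _⟩⟩

lemma copsWin_copNumber [Finite V] (G : SimpleGraph V) : CopsWin G (copNumber G) :=
  Nat.sInf_mem (s := {k | CopsWin G k}) ⟨_, copsWin_natCard G⟩

end Game

section Potential

variable {G : SimpleGraph V} {t k q : ℕ} {b : ℝ} {x x' u v p : V} {c c' : Fin k → V}

/-- A cop at `x` is in front of a robber who has just moved from `p` to `v`: that move brought the
robber closer to the cop, to a distance less than `2 * t`. If `x` is not connected to the edge `pv`,
then both distances are `0` by convention and the condition fails. -/
def IsInFront (G : SimpleGraph V) (t : ℕ) (x v p : V) : Prop :=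
  G.dist p x = G.dist v x + 1 ∧ G.dist v x < 2 * t

open Classical in
/-- The danger that a cop at `x` poses to a robber who has just moved from `p` to `v`. It grows by a
factor `b` whenever the cop in front gets two steps closer. -/
noncomputable def copWeight (G : SimpleGraph V) (t : ℕ) (b : ℝ) (x v p : V) : ℝ :=
  if IsInFront G t x v p then b ^ (t - G.dist v x / 2) else 0

/-- The total danger that the cops at `c` pose to a robber who has just moved from `p` to `v`. -/
noncomputable def potential (G : SimpleGraph V) (t : ℕ) (b : ℝ) (c : Fin k → V) (v p : V) : ℝ :=
  ∑ i, copWeight G t b (c i) v p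

lemma copWeight_of_isInFront (h : IsInFront G t x v p) :
    copWeight G t b x v p = b ^ (t - G.dist v x / 2) := if_pos h

lemma copWeight_of_not_isInFront (h : ¬ IsInFront G t x v p) : copWeight G t b x v p = 0 :=
  if_neg h

lemma copWeight_nonneg (hb : 0 ≤ b) : 0 ≤ copWeight G t b x v p := by
  unfold copWeight
  split_ifs <;> positivity

lemma potential_nonneg (hb : 0 ≤ b) : 0 ≤ potential G t b c v p :=
  Finset.sum_nonneg fun _ _ ↦ copWeight_nonneg hb

lemma dist_le_dist_add_one_of_move (hx : x' = x ∨ G.Adj x x') (y : V) :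
    G.dist y x ≤ G.dist y x' + 1 ∧ G.dist y x' ≤ G.dist y x + 1 := by
  rcases hx with rfl | hx
  · omega
  · exact ⟨dist_le_dist_add_one_of_adj hx, dist_le_dist_add_one_of_adj hx.symm⟩

lemma isInFront_of_move (hg : ((4 * t : ℕ) : ℕ∞) < G.egirth) (hx : x' = x ∨ G.Adj x x')
    (hp : G.Adj v p) (hu : G.Adj v u) (hup : u ≠ p) (hcloser : G.dist v x' = G.dist u x' + 1)
    (hnear : G.dist u x' + 2 < 2 * t) : IsInFront G t x v p := by
  have hmove := dist_le_dist_add_one_of_move hx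
  have hv := hmove v
  have hp' : G.dist p x' = G.dist v x' + 1 :=
    dist_eq_add_one_of_ne hg hu hp hup hcloser (by omega)
  have hreach : G.Reachable v x := by
    have hvx' : G.Reachable v x' := .of_dist_ne_zero (by omega)
    rcases hx with rfl | hx
    exacts [hvx', hvx'.trans hx.symm.reachable]
  have hlevel := dist_ne_dist_of_adj hg hreach hp (by omega)
  have hparent : G.dist v x ≠ G.dist p x + 1 := by
    intro hpx
    have hux := dist_eq_add_one_of_ne hg hp hu hup.symm hpx (by omega)
    have := hmove u
    have := hmove p
    omega
  have hstep := hp.diff_dist_adj (u := x)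
  simp only [G.dist_comm (u := x)] at hstep
  exact ⟨by omega, by omega⟩

lemma copWeight_le_of_move (hg : ((4 * t : ℕ) : ℕ∞) < G.egirth) (hb : 1 ≤ b)
    (hx : x' = x ∨ G.Adj x x') (hp : G.Adj v p) (hu : G.Adj v u) (hup : u ≠ p)
    (hfront : IsInFront G t x' u v) :
    copWeight G t b x' u v ≤ b * (copWeight G t b x v p + 1) := by
  rw [copWeight_of_isInFront hfront]
  by_cases hfront_before : IsInFront G t x v p
  · have hexp : t - G.dist u x' / 2 ≤ t - G.dist v x / 2 + 1 := by
      have := dist_le_dist_add_one_of_move hx v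
      have := hfront.1
      omega
    calc b ^ (t - G.dist u x' / 2) ≤ b ^ (t - G.dist v x / 2 + 1) := pow_le_pow_right₀ hb hexp
      _ = b * copWeight G t b x v p := by rw [copWeight_of_isInFront hfront_before, pow_succ']
      _ ≤ b * (copWeight G t b x v p + 1) := by gcongr; linarith
  · have hfar : 2 * t ≤ G.dist u x' + 2 := by
      by_contra! hnear
      exact hfront_before (isInFront_of_move hg hx hp hu hup hfront.1 hnear)
    calc b ^ (t - G.dist u x' / 2) ≤ b ^ 1 := pow_le_pow_right₀ hb (by omega)
      _ = b * (copWeight G t b x v p + 1) := by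
        rw [copWeight_of_not_isInFront hfront_before, zero_add, pow_one, mul_one]

lemma sum_copWeight_le_of_move (hg : ((4 * t : ℕ) : ℕ∞) < G.egirth) (hb : 1 ≤ b)
    (hx : x' = x ∨ G.Adj x x') (hp : G.Adj v p) {S : Finset V}
    (hS : ∀ u ∈ S, G.Adj v u ∧ u ≠ p) :
    ∑ u ∈ S, copWeight G t b x' u v ≤ b * (copWeight G t b x v p + 1) := by
  by_cases hfront : ∃ u ∈ S, IsInFront G t x' u v
  · obtain ⟨u, huS, hu⟩ := hfront
    have hunique : ∀ w ∈ S, w ≠ u → copWeight G t b x' w v = 0 := by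
      refine fun w hwS hwu ↦ copWeight_of_not_isInFront fun hw ↦ hwu ?_
      obtain ⟨hcloser, hnear⟩ := hu
      exact eq_of_adj_of_dist_eq_add_one hg (hS w hwS).1 (hS u huS).1 hw.1 hcloser (by omega)
    rw [Finset.sum_eq_single_of_mem u huS hunique]
    exact copWeight_le_of_move hg hb hx hp (hS u huS).1 (hS u huS).2 hu
  · rw [Finset.sum_eq_zero fun u hu ↦ copWeight_of_not_isInFront fun h ↦ hfront ⟨u, hu, h⟩]
    have := copWeight_nonneg (G := G) (t := t) (x := x) (v := v) (p := p) (zero_le_one.trans hb)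
    positivity

lemma sum_potential_le_of_copMove (hg : ((4 * t : ℕ) : ℕ∞) < G.egirth) (hb : 1 ≤ b)
    (hc : CopMove G c c') (hp : G.Adj v p) {S : Finset V} (hS : ∀ u ∈ S, G.Adj v u ∧ u ≠ p) :
    ∑ u ∈ S, potential G t b c' u v ≤ b * (potential G t b c v p + k) := by
  calc ∑ u ∈ S, potential G t b c' u v
      = ∑ i, ∑ u ∈ S, copWeight G t b (c' i) u v := Finset.sum_comm
    _ ≤ ∑ i, b * (copWeight G t b (c i) v p + 1) :=
      Finset.sum_le_sum fun i _ ↦ sum_copWeight_le_of_move hg hb (hc i) hp hS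
    _ = b * (potential G t b c v p + k) := by
      simp [potential, ← Finset.mul_sum, Finset.sum_add_distrib]

lemma exists_adj_mul_potential_le [G.LocallyFinite] (hg : ((4 * t : ℕ) : ℕ∞) < G.egirth)
    (hdeg : ∀ v, q + 1 ≤ G.degree v) (hq : 0 < q) (hb : 1 ≤ b) (hc : CopMove G c c')
    (hp : G.Adj v p) :
    ∃ u, G.Adj v u ∧ q * potential G t b c' u v ≤ b * (potential G t b c v p + k) := by
  classical
  let S := (G.neighborFinset v).erase p
  have hS : ∀ u ∈ S, G.Adj v u ∧ u ≠ p := fun u hu ↦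
    ⟨(G.mem_neighborFinset v u).1 (Finset.mem_of_mem_erase hu), Finset.ne_of_mem_erase hu⟩
  have hcard : q ≤ S.card := by
    rw [Finset.card_erase_of_mem ((G.mem_neighborFinset v p).2 hp), card_neighborFinset_eq_degree]
    exact Nat.le_sub_one_of_lt (hdeg v)
  let bound := b * (potential G t b c v p + k)
  have hbound_nonneg : 0 ≤ bound := by
    have := potential_nonneg (G := G) (t := t) (c := c) (v := v) (p := p) (zero_le_one.trans hb)
    positivity
  have hsum : ∑ u ∈ S, q * potential G t b c' u v ≤ ∑ _u ∈ S, bound := by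
    calc ∑ u ∈ S, q * potential G t b c' u v = q * ∑ u ∈ S, potential G t b c' u v :=
          (Finset.mul_sum ..).symm
      _ ≤ q * bound := by gcongr; exact sum_potential_le_of_copMove hg hb hc hp hS
      _ ≤ S.card * bound := by gcongr
      _ = ∑ _u ∈ S, bound := by rw [Finset.sum_const, nsmul_eq_mul]
  obtain ⟨u, hu, hle⟩ := Finset.exists_le_of_sum_le (Finset.card_pos.1 (hq.trans_le hcard)) hsum
  exact ⟨u, (hS u hu).1, hle⟩

lemma pow_le_potential {i : Fin k} (hb : 0 ≤ b) (hfront : IsInFront G t (c i) v p)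
    (hdist : G.dist v (c i) ≤ 1) : b ^ t ≤ potential G t b c v p := by
  have hweight : copWeight G t b (c i) v p = b ^ t := by
    rw [copWeight_of_isInFront hfront, Nat.div_eq_of_lt (by omega), Nat.sub_zero]
  rw [← hweight]
  exact Finset.single_le_sum (f := fun i ↦ copWeight G t b (c i) v p)
    (fun _ _ ↦ copWeight_nonneg hb) (Finset.mem_univ i)

lemma ne_of_potential_lt (ht : 0 < t) (hb : 0 ≤ b) (hp : G.Adj v p)
    (hlt : potential G t b c v p < b ^ t) (i : Fin k) : c i ≠ v := by
  rintro rfl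
  have hdist : G.dist p (c i) = 1 := dist_eq_one_iff_adj.2 hp.symm
  exact hlt.not_ge (pow_le_potential hb ⟨by rw [dist_self, hdist], by rw [dist_self]; omega⟩
    (by rw [dist_self]; omega))

lemma not_adj_of_potential_lt (hg : ((4 * t : ℕ) : ℕ∞) < G.egirth) (ht : 0 < t) (hb : 0 ≤ b)
    (hp : G.Adj v p) (hlt : potential G t b c v p < b ^ t) {i : Fin k} (hi : c i ≠ p) :
    ¬ G.Adj (c i) v := by
  intro hadj
  have hdist : G.dist v (c i) = 1 := dist_eq_one_iff_adj.2 hadj.symm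
  have hfront : G.dist p (c i) = G.dist v (c i) + 1 :=
    dist_eq_add_one_of_ne hg hadj.symm hp hi (by rw [hdist, dist_self]) (by omega)
  exact hlt.not_ge (pow_le_potential hb ⟨hfront, by omega⟩ hdist.le)

end Potential

section Strategy

variable {G : SimpleGraph V} {t k q : ℕ} {b : ℝ}

lemma exists_lt_of_forall_exists_mul_le {ι : Type*} [Nonempty ι] {f : ι → ℝ} {a b q M : ℝ}
    (hb : 0 < b) (hbq : b < q) (hM : b * (M + a) < q * M)
    (hstep : ∀ i, ∃ j, q * f j ≤ b * (f i + a)) : ∃ i, f i < M := by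
  by_contra! hge
  have hbdd : BddBelow (Set.range f) := ⟨M, Set.forall_mem_range.2 hge⟩
  have hinf : q * (⨅ i, f i) / b - a ≤ ⨅ i, f i := by
    refine le_ciInf fun i ↦ ?_
    obtain ⟨j, hj⟩ := hstep i
    rw [sub_le_iff_le_add, div_le_iff₀' hb]
    exact (mul_le_mul_of_nonneg_left (ciInf_le hbdd j) (hb.trans hbq).le).trans hj
  rw [sub_le_iff_le_add, div_le_iff₀' hb] at hinf
  have hM_le : (q - b) * M ≤ (q - b) * ⨅ i, f i :=
    mul_le_mul_of_nonneg_left (le_ciInf hge) (sub_nonneg.2 hbq.le)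
  linarith

lemma exists_adj_potential_lt [Nonempty V] [G.LocallyFinite]
    (hg : ((4 * t : ℕ) : ℕ∞) < G.egirth) (hdeg : ∀ v, q + 1 ≤ G.degree v) (hb : 1 ≤ b)
    (hbq : b < q) (hk : b * (b ^ t + k) < q * b ^ t) (c : Fin k → V) :
    ∃ v p, G.Adj v p ∧ potential G t b c v p < b ^ t := by
  have hq : 0 < q := by exact_mod_cast zero_lt_one.trans (hb.trans_lt hbq)
  have : Nonempty G.Dart := by
    let v := Classical.arbitrary V
    obtain ⟨w, hw⟩ := (G.degree_pos_iff_exists_adj v).1 (Nat.succ_pos q |>.trans_le (hdeg v))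
    exact ⟨⟨(v, w), hw⟩⟩
  obtain ⟨e, he⟩ := exists_lt_of_forall_exists_mul_le (f := fun e : G.Dart ↦
    potential G t b c e.fst e.snd) (zero_lt_one.trans_le hb) hbq hk fun e ↦ by
      obtain ⟨u, hu, hle⟩ := exists_adj_mul_potential_le hg hdeg hq hb (.refl c) e.adj
      exact ⟨⟨(u, e.fst), hu.symm⟩, hle⟩
  exact ⟨e.fst, e.snd, e.adj, he⟩

theorem not_copsWin_of_mul_lt [Nonempty V] [G.LocallyFinite] (ht : 0 < t)
    (hg : ((4 * t : ℕ) : ℕ∞) < G.egirth) (hdeg : ∀ v, q + 1 ≤ G.degree v) (hb : 1 ≤ b)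
    (hk : b * (b ^ t + k) < q * b ^ t) : ¬ CopsWin G k := by
  have hb0 : 0 < b := zero_lt_one.trans_le hb
  have hpow : 0 < b ^ t := pow_pos hb0 t
  have hbq : b < q := by
    refine lt_of_mul_lt_mul_right (lt_of_le_of_lt ?_ hk) hpow.le
    gcongr
    exact le_add_of_nonneg_right k.cast_nonneg
  have hq : 0 < q := by exact_mod_cast hb0.trans hbq
  have hescape : ∀ {c c' : Fin k → V} {v p : V}, CopMove G c c' → G.Adj v p →
      potential G t b c v p < b ^ t → ∃ u, G.Adj v u ∧ potential G t b c' u v < b ^ t := by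
    intro c c' v p hc hp hlt
    obtain ⟨u, hu, hle⟩ := exists_adj_mul_potential_le hg hdeg hq hb hc hp
    refine ⟨u, hu, lt_of_mul_lt_mul_left (hle.trans_lt (lt_trans ?_ hk)) q.cast_nonneg⟩
    gcongr
  let Safe : (Fin k → V) → V → Prop := fun c v ↦
    ∃ p, G.Adj v p ∧ (∀ i, c i ≠ p) ∧ potential G t b c v p < b ^ t
  have hfree : ∀ c c' v, CopMove G c c' → Safe c v → ∀ i, c' i ≠ v := by
    rintro c c' v hc ⟨p, hp, hcp, hlt⟩ i rfl
    rcases hc i with hstay | hadj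
    · exact ne_of_potential_lt ht hb0.le hp hlt i hstay.symm
    · exact not_adj_of_potential_lt hg ht hb0.le hp hlt (hcp i) hadj
  refine not_copsWin_of_invariant Safe (fun c ↦ ?_) hfree fun c c' v hc hsafe ↦ ?_
  · obtain ⟨v, p, hp, hlt⟩ := exists_adj_potential_lt hg hdeg hb hbq hk c
    obtain ⟨u, hu, hlt'⟩ := hescape (.refl c) hp hlt
    exact ⟨u, v, hu.symm, ne_of_potential_lt ht hb0.le hp hlt, hlt'⟩
  · have hcv := hfree c c' v hc hsafe
    obtain ⟨p, hp, -, hlt⟩ := hsafe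
    obtain ⟨u, hu, hlt'⟩ := hescape hc hp hlt
    exact ⟨u, .inr hu, v, hu.symm, hcv, hlt'⟩

theorem pow_le_exp_one_mul_of_copsWin [Nonempty V] [G.LocallyFinite] (ht : 0 < t)
    (hg : ((4 * t : ℕ) : ℕ∞) < G.egirth) (hq : 2 ≤ q) (hdeg : ∀ v, q + 1 ≤ G.degree v)
    (hwin : CopsWin G k) : (q : ℝ) ^ t ≤ Real.exp 1 * (t * k) := by
  have ht1 : (1 : ℝ) ≤ t := by exact_mod_cast ht
  have hq2 : (2 : ℝ) ≤ q := by exact_mod_cast hq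
  set b : ℝ := q * t / (t + 1) with hb_def
  have hb : 1 ≤ b := by
    rw [hb_def, one_le_div (by positivity)]
    nlinarith
  have hq_eq : (q : ℝ) = (1 + (t : ℝ)⁻¹) * b := by
    rw [hb_def]
    field_simp
  have hbound : b ^ t ≤ t * k := by
    by_contra! hlt
    refine not_copsWin_of_mul_lt ht hg hdeg hb ?_ hwin
    have hk_lt : (k : ℝ) < (t : ℝ)⁻¹ * b ^ t := by
      rwa [lt_inv_mul_iff₀ (by positivity)]
    calc b * (b ^ t + k) < b * (b ^ t + (t : ℝ)⁻¹ * b ^ t) := by gcongr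
      _ = q * b ^ t := by rw [hq_eq]; ring
  calc (q : ℝ) ^ t = (1 + (t : ℝ)⁻¹) ^ t * b ^ t := by rw [hq_eq, mul_pow]
    _ ≤ Real.exp 1 * (t * k) := by
      gcongr
      exact Real.one_add_inv_pow_le_exp

lemma natCast_sub_one_pow_le_one {d : ℕ} (hd : d ≤ 2) (t : ℕ) : ((d : ℝ) - 1) ^ t ≤ 1 := by
  have hd2 : (d : ℝ) ≤ 2 := by exact_mod_cast hd
  have habs : |(d : ℝ) - 1| ≤ 1 :=
    abs_le.2 ⟨by linarith [d.cast_nonneg (α := ℝ)], by linarith⟩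
  calc ((d : ℝ) - 1) ^ t ≤ |((d : ℝ) - 1) ^ t| := le_abs_self _
    _ = |(d : ℝ) - 1| ^ t := abs_pow _ _
    _ ≤ 1 := pow_le_one₀ (abs_nonneg _) habs

end Strategy

end CopsAndRobbers

open CopsAndRobbers in
theorem copNumber_ge_of_girth_eq_general [Nonempty V] (G : SimpleGraph V) [G.LocallyFinite]
    {d g k : ℕ} (hdeg : ∀ v, d ≤ G.degree v) (hg : 0 < g) (hgirth : (g : ℕ∞) ≤ G.egirth)
    (hwin : CopsWin G k) :
    (1 / (g : ℝ)) * ((d : ℝ) - 1) ^ ((g - 1) / 4) ≤ (k : ℝ) := by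
  rw [one_div_mul_eq_div, div_le_iff₀' (by exact_mod_cast hg)]
  set t := (g - 1) / 4
  by_cases hbranch : 0 < t ∧ 3 ≤ d
  · obtain ⟨ht, hd⟩ := hbranch
    obtain ⟨q, rfl⟩ : ∃ q, d = q + 1 := ⟨d - 1, by omega⟩
    have ht_girth : ((4 * t : ℕ) : ℕ∞) < G.egirth :=
      lt_of_lt_of_le (by exact_mod_cast (by omega : 4 * t < g)) hgirth
    have htg : 3 * (t : ℝ) ≤ g := by exact_mod_cast (by omega : 3 * t ≤ g)
    calc ((q + 1 : ℕ) - 1 : ℝ) ^ t = (q : ℝ) ^ t := by rw [Nat.cast_succ, add_sub_cancel_right]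
      _ ≤ Real.exp 1 * (t * k) :=
        pow_le_exp_one_mul_of_copsWin ht ht_girth (by omega) hdeg hwin
      _ ≤ 3 * (t * k) := by gcongr; exact Real.exp_one_lt_three.le
      _ ≤ g * k := by rw [← mul_assoc]; gcongr
  · have hpow : ((d : ℝ) - 1) ^ t ≤ 1 := by
      rcases Nat.eq_zero_or_pos t with ht | ht
      · rw [ht, pow_zero]
      · exact natCast_sub_one_pow_le_one (by omega) t
    exact hpow.trans (by exact_mod_cast Nat.mul_pos hg (pos_of_copsWin hwin))

/-- Every finite connected graph `G` with finite girth `g` and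
minimum degree `δ` has cop number at least `(1/g) * (δ - 1) ^ ⌊(g-1)/4⌋`. -/
theorem copNumber_ge_of_girth_eq [Fintype V] (G : SimpleGraph V) [DecidableRel G.Adj]
    (hconn : G.Connected) (g : ℕ) (hgirth : G.egirth = (g : ℕ∞)) :
    (1 / (g : ℝ)) * ((G.minDegree : ℝ) - 1) ^ ((g - 1) / 4) ≤ (copNumber G : ℝ) := by
  have := hconn.nonempty
  have hg : 0 < g := by exact_mod_cast three_pos.trans_le (hgirth ▸ G.three_le_egirth)
  exact copNumber_ge_of_girth_eq_general G G.minDegree_le_degree hg hgirth.ge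
    (CopsAndRobbers.copsWin_copNumber G)
end

section
/- Let Δ ≥ 3 be an integer and let ε and γ be real numbers with 0 < ε ≤ Δ − 2 and 0 < γ ≤ (1/2)(1 − log_{Δ−1}(1+ε)). Then for every real δ > 0 there exists an integer n₀ such that every finite connected graph G of maximum degree at most Δ, of order n ≥ n₀, and with h_γ(G) ≥ ε satisfies c(G) ≤ n^{1 − (1/2)·log_{Δ−1}(1+ε) + δ}. -/
/-!
The game of cops and robbers on a (finite connected) simple graph `G`:
first the `k` cops choose starting vertices, then the robber chooses a starting
vertex (knowing the cops' positions); the players alternate turns (cops first),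
each cop may stay or move to an adjacent vertex, and the robber may stay or move
to an adjacent vertex.  The cops win if at some moment a cop occupies the same
vertex as the robber.  The cop number is the least `k` for which the cops have
a winning strategy.
-/

variable {V : Type*}

/-- The vertex boundary `∂S` of a vertex set `S`: vertices outside `S` having a
neighbor in `S`. -/
def vertexBoundary (G : SimpleGraph V) (S : Set V) : Set V :=
  {v | v ∉ S ∧ ∃ u ∈ S, G.Adj u v}

/-- The expansion parameter `h_γ(G)`: the minimum of `|∂S| / |S|` over nonempty
vertex sets `S` with `|S| ≤ n^(1-γ)`, where `n` is the order of `G`. -/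
noncomputable def hGamma [Fintype V] (G : SimpleGraph V) (γ : ℝ) : ℝ :=
  sInf {x : ℝ | ∃ S : Set V, S.Nonempty ∧
    (S.ncard : ℝ) ≤ (Fintype.card V : ℝ) ^ (1 - γ) ∧
    x = ((vertexBoundary G S).ncard : ℝ) / (S.ncard : ℝ)}

/-!
Place `k` cops independently and uniformly at random, and let `r` be maximal with
`(Δ - 1) ^ r ≤ √n`. Within `r` rounds a robber starting at `x` can only reach the ball of
radius `r` around `x`, which has `O(√n)` vertices. If every subset `S` of that ball has at least
`|S|` cops within distance `r`, then Hall's theorem provides distinct cops for the vertices of the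
ball, each able to reach its own vertex in `r` moves, and the robber is caught. The expansion of `G`
forces the `r`-neighborhood of `S` to have at least `min ((1 + ε) ^ r |S|) (n ^ (1 - γ))` vertices,
so a Chernoff bound together with a union bound over all `S` shows that a suitable placement exists
as soon as `k` exceeds a constant times `n ^ (1 - 1/2 log_{Δ-1} (1 + ε)) log (4n)`.
-/

section Neighborhoods

/-- The closed neighborhood `N[S] = S ∪ ∂S`. Its `r`-th iterate applied to `S` is the closed ball of
radius `r` around `S`. Unlike a definition through `SimpleGraph.dist`, this needs no convention for
unreachable vertices. -/
def closedNeighborhood (G : SimpleGraph V) (S : Set V) : Set V := S ∪ vertexBoundary G S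

variable (G : SimpleGraph V) {S : Set V} {u v : V} {r : ℕ}

lemma mem_closedNeighborhood : v ∈ closedNeighborhood G S ↔ ∃ u ∈ S, v = u ∨ G.Adj u v := by
  by_cases hv : v ∈ S
  · exact iff_of_true (.inl hv) ⟨v, hv, .inl rfl⟩
  · simp only [closedNeighborhood, vertexBoundary, Set.mem_union, Set.mem_ofPred_eq, hv, false_or,
      not_false_eq_true, true_and]
    exact exists_congr fun u ↦ and_congr_right fun hu ↦
      (or_iff_right (ne_of_mem_of_not_mem hu hv).symm).symm

lemma mem_closedNeighborhood_singleton : v ∈ closedNeighborhood G {u} ↔ v = u ∨ G.Adj u v := by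
  simp [mem_closedNeighborhood]

lemma monotone_closedNeighborhood : Monotone (closedNeighborhood G) := fun S T hST v hv ↦ by
  rw [mem_closedNeighborhood] at hv ⊢
  exact hv.imp fun u hu ↦ hu.imp_left (hST ·)

lemma mem_iterate_closedNeighborhood :
    v ∈ (closedNeighborhood G)^[r] S ↔ ∃ u ∈ S, v ∈ (closedNeighborhood G)^[r] {u} := by
  induction r generalizing v with
  | zero => simp
  | succ r ih =>
    simp only [Function.iterate_succ_apply', mem_closedNeighborhood G, ih (v := _)]
    grind

lemma exists_adj_mem_iterate_closedNeighborhood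
    (h : v ∈ (closedNeighborhood G)^[r + 1] S) :
    ∃ w, (w = v ∨ G.Adj v w) ∧ w ∈ (closedNeighborhood G)^[r] S := by
  rw [Function.iterate_succ_apply', mem_closedNeighborhood] at h
  obtain ⟨w, hw, hvw⟩ := h
  exact ⟨w, hvw.imp Eq.symm .symm, hw⟩

lemma iterate_closedNeighborhood_subset_succ (h : v = u ∨ G.Adj u v) :
    (closedNeighborhood G)^[r] {v} ⊆ (closedNeighborhood G)^[r + 1] {u} := by
  rw [Function.iterate_succ_apply]
  exact (monotone_closedNeighborhood G).iterate r <|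
    Set.singleton_subset_iff.2 <| (mem_closedNeighborhood_singleton G).2 h

lemma ncard_closedNeighborhood [Finite V] (S : Set V) :
    (closedNeighborhood G S).ncard = S.ncard + (vertexBoundary G S).ncard :=
  Set.ncard_union_eq <| Set.disjoint_left.2 fun _ hS hB ↦ hB.1 hS

end Neighborhoods

section Game

variable (G : SimpleGraph V) {k : ℕ}

/-- `CopsWinIn G t c x`: the cops, standing at `c` and about to move, can force the capture of the
robber standing at `x` within `t` rounds. -/
def CopsWinIn : ℕ → (Fin k → V) → V → Prop
  | 0, c, x => ∃ i, c i = x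
  | t + 1, c, x => CopsWinIn t c x ∨ ∃ c' : Fin k → V, (∀ i, c' i = c i ∨ G.Adj (c i) (c' i)) ∧
      ∀ x', x' = x ∨ G.Adj x x' → CopsWinIn t c' x'

/-- Aiming at the least `t` with `CopsWinIn G t c x` makes a single move good for all `t`. -/
lemma exists_move_of_copsWinIn (c : Fin k → V) (x : V) :
    ∃ c' : Fin k → V, (∀ i, c' i = c i ∨ G.Adj (c i) (c' i)) ∧
      ∀ t, CopsWinIn G t c x → (∃ i, c i = x) ∨
        ∃ s < t, ∀ x', x' = x ∨ G.Adj x x' → CopsWinIn G s c' x' := by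
  classical
  by_cases hwin : ∃ t, CopsWinIn G t c x
  · obtain ⟨m, hm, hmin⟩ : ∃ m, CopsWinIn G m c x ∧ ∀ t, CopsWinIn G t c x → m ≤ t :=
      ⟨Nat.find hwin, Nat.find_spec hwin, fun t ht ↦ Nat.find_min' hwin ht⟩
    match m, hm with
    | 0, hcapture => exact ⟨c, fun _ ↦ .inl rfl, fun _ _ ↦ .inl hcapture⟩
    | m + 1, .inl hm => exact absurd (hmin m hm) (by lia)
    | m + 1, .inr ⟨c', hc', hwin'⟩ => exact ⟨c', hc', fun t ht ↦ .inr ⟨m, hmin t ht, hwin'⟩⟩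
  · exact ⟨c, fun _ ↦ .inl rfl, fun t ht ↦ absurd ⟨t, ht⟩ hwin⟩

variable {G}

lemma copsWin_of_forall_copsWinIn {c : Fin k → V} {t : ℕ} (h : ∀ x, CopsWinIn G t c x) :
    CopsWin G k := by
  choose move hvalid hmove using exists_move_of_copsWinIn G (k := k)
  let CS : CopStrategy G k := ⟨c, move, hvalid⟩
  refine ⟨CS, fun RS ↦ ?_⟩
  have capture (t n : ℕ) (hn : CopsWinIn G t (play CS RS n).1 (play CS RS n).2) :
      ∃ m i, (play CS RS m).1 i = (play CS RS m).2 := by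
    induction t using Nat.strong_induction_on generalizing n with
    | _ t ih =>
      obtain hcaught | ⟨s, hs, hwin⟩ := hmove _ _ t hn
      · exact ⟨n, hcaught⟩
      · exact ih s hs (n + 1) (hwin _ (RS.valid _ _))
  exact (capture t 0 (h _)).imp fun _ ↦ .inl

/-- Each cop `i` walks towards its own target `g i`, whatever the robber does. -/
lemma copsWinIn_of_targets (g : Fin k → V) {t : ℕ} {c : Fin k → V} {x : V}
    (h : ∀ u ∈ (closedNeighborhood G)^[t] {x},
      ∃ i, g i = u ∧ c i ∈ (closedNeighborhood G)^[t] {u}) :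
    CopsWinIn G t c x := by
  induction t generalizing c x with
  | zero =>
    obtain ⟨i, -, hi⟩ := h x rfl
    exact ⟨i, hi⟩
  | succ t ih =>
    have step (i : Fin k) : ∃ b, (b = c i ∨ G.Adj (c i) b) ∧
        (c i ∈ (closedNeighborhood G)^[t + 1] {g i} → b ∈ (closedNeighborhood G)^[t] {g i}) := by
      by_cases hi : c i ∈ (closedNeighborhood G)^[t + 1] {g i}
      · exact (exists_adj_mem_iterate_closedNeighborhood G hi).imp
          fun _ ↦ And.imp_right fun hb _ ↦ hb
      · exact ⟨c i, .inl rfl, fun hi' ↦ absurd hi' hi⟩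
    choose c' hc' hcloser using step
    refine .inr ⟨c', hc', fun x' hx' ↦ ih fun u hu ↦ ?_⟩
    obtain ⟨i, rfl, hi⟩ := h u (iterate_closedNeighborhood_subset_succ G hx' hu)
    exact ⟨i, rfl, hcloser i hi⟩

lemma copsWin_of_forall_card_le {r : ℕ} (ω : Fin k → V)
    (h : ∀ (x : V) (S : Finset V), (S : Set V) ⊆ (closedNeighborhood G)^[r] {x} →
      S.card ≤ {i | ω i ∈ (closedNeighborhood G)^[r] S}.ncard) :
    CopsWin G k := by
  classical
  refine copsWin_of_forall_copsWinIn (c := ω) (t := r) fun x ↦ ?_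
  let B := (closedNeighborhood G)^[r] {x}
  obtain ⟨f, hf, hfr⟩ : ∃ f : B → Fin k, f.Injective ∧
      ∀ u : B, ω (f u) ∈ (closedNeighborhood G)^[r] {u.1} := by
    rw [← Fintype.all_card_le_filter_rel_iff_exists_injective
      fun (u : B) i ↦ ω i ∈ (closedNeighborhood G)^[r] {u.1}]
    intro S
    have hS := h x (S.map (.subtype _)) (by
      rw [Finset.coe_map]; exact Subtype.coe_image_subset B S)
    rw [Finset.card_map, Set.ncard_eq_toFinset_card'] at hS
    refine hS.trans (Finset.card_le_card fun i hi ↦ ?_)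
    simpa [mem_iterate_closedNeighborhood G (S := Subtype.val '' _)] using hi
  refine copsWinIn_of_targets (Function.extend f Subtype.val fun _ ↦ x) fun u hu ↦
    ⟨f ⟨u, hu⟩, hf.extend_apply _ _ _, hfr ⟨u, hu⟩⟩

end Game

section RandomPlacement

open Real

variable {α ι : Type*} [Fintype α] [Fintype ι] [Fintype V]

lemma ncard_setOf_ncard_preimage_le_le (A : Set V) (s : ℕ) :
    ({ω : ι → V | (ω ⁻¹' A).ncard ≤ s}.ncard : ℝ) ≤
      2 ^ s * (Fintype.card V - A.ncard / 2) ^ Fintype.card ι := by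
  classical
  -- Exponential moment bound: Markov applied to `2 ^ (s - N)`, with `N` the number of hits of `A`.
  let weight (v : V) : ℝ := if v ∈ A then 1 / 2 else 1
  have prod_weight (ω : ι → V) : ∏ i, weight (ω i) = (1 / 2) ^ (ω ⁻¹' A).ncard := by
    simp [weight, Finset.prod_ite, Set.ncard_eq_toFinset_card', Set.preimage]
  have sum_weight : ∑ v, weight v = Fintype.card V - A.ncard / 2 := by
    have (v : V) : weight v = 1 - if v ∈ A then 1 / 2 else 0 := by
      simp only [weight]; split_ifs <;> norm_num
    simp [this, Set.ncard_eq_toFinset_card', Finset.sum_ite, Set.toFinset, div_eq_mul_inv]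
  calc ({ω : ι → V | (ω ⁻¹' A).ncard ≤ s}.ncard : ℝ)
    _ = ∑ ω : ι → V, if (ω ⁻¹' A).ncard ≤ s then 1 else 0 := by
      simp [Set.ncard_eq_toFinset_card']
    _ ≤ ∑ ω : ι → V, 2 ^ s * ∏ i, weight (ω i) := by
      gcongr with ω
      rw [prod_weight]
      split_ifs with hω
      · calc (1 : ℝ) = 2 ^ s * (1 / 2) ^ s := by rw [← mul_pow]; norm_num
          _ ≤ 2 ^ s * (1 / 2) ^ (ω ⁻¹' A).ncard :=
            mul_le_mul_of_nonneg_left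
              (pow_le_pow_of_le_one (by norm_num) (by norm_num) hω) (by positivity)
      · positivity
    _ = 2 ^ s * (Fintype.card V - A.ncard / 2) ^ Fintype.card ι := by
      rw [← Finset.mul_sum, ← sum_weight, ← Finset.card_univ, ← Finset.prod_const,
        Fintype.prod_sum]

lemma ncard_setOf_ncard_preimage_le_le_of_mul_log_le [Nonempty V] {A : Set V} {s : ℕ} {x : ℝ}
    (hx : 0 < x) (h : 2 * Fintype.card V * (s * log x) ≤ Fintype.card ι * A.ncard) :
    ({ω : ι → V | (ω ⁻¹' A).ncard ≤ s}.ncard : ℝ) ≤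
      (2 / x) ^ s * Fintype.card V ^ Fintype.card ι := by
  have hn : (0 : ℝ) < Fintype.card V := by exact_mod_cast Fintype.card_pos
  have hA : (A.ncard : ℝ) ≤ Fintype.card V := by
    exact_mod_cast (Set.ncard_le_card A).trans_eq Nat.card_eq_fintype_card
  set n := (Fintype.card V : ℝ)
  set k := Fintype.card ι
  have one_sub_le_exp : n - A.ncard / 2 ≤ n * exp (-(A.ncard / (2 * n))) := by
    calc n - A.ncard / 2 = n * (-(A.ncard / (2 * n)) + 1) := by field_simp; ring
      _ ≤ n * exp (-(A.ncard / (2 * n))) := by gcongr; exact add_one_le_exp _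
  have log_le : s * log x ≤ k * (A.ncard / (2 * n)) := by
    rw [← mul_div_assoc, le_div_iff₀ (by positivity)]
    linarith
  calc ({ω : ι → V | (ω ⁻¹' A).ncard ≤ s}.ncard : ℝ)
    _ ≤ 2 ^ s * (n - A.ncard / 2) ^ k := ncard_setOf_ncard_preimage_le_le A s
    _ ≤ 2 ^ s * (n * exp (-(A.ncard / (2 * n)))) ^ k := by gcongr; linarith
    _ = 2 ^ s * (n ^ k * exp (-(k * (A.ncard / (2 * n))))) := by
      rw [mul_pow, ← exp_nat_mul, mul_neg]
    _ ≤ 2 ^ s * (n ^ k * exp (-(s * log x))) := by gcongr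
    _ = (2 / x) ^ s * n ^ k := by
      rw [exp_neg, exp_nat_mul, exp_log hx, div_pow]; ring

open Classical in
lemma sum_nonempty_inv_two_mul_card_pow_card_lt_one :
    ∑ S : Finset α with S.Nonempty, (1 / (2 * Fintype.card α : ℝ)) ^ S.card < 1 := by
  set m := Fintype.card α
  have sum_all : ∑ S : Finset α, (1 / (2 * m : ℝ)) ^ S.card = (1 + 1 / (2 * m)) ^ m := by
    simpa [add_comm] using (Fintype.sum_pow_mul_eq_add_pow α (1 / (2 * m : ℝ)) 1)
  have sum_empty : ∑ S : Finset α with ¬ S.Nonempty, (1 / (2 * m : ℝ)) ^ S.card = 1 := by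
    simp [Finset.not_nonempty_iff_eq_empty, Finset.filter_eq']
  have pow_lt_two : (1 + 1 / (2 * m) : ℝ) ^ m < 2 := by
    calc (1 + 1 / (2 * m) : ℝ) ^ m ≤ exp (1 / (2 * m)) ^ m := by
          gcongr; rw [add_comm]; exact add_one_le_exp _
      _ = exp (m * (1 / (2 * m))) := (exp_nat_mul _ _).symm
      _ ≤ exp (1 / 2) := by
        gcongr
        rcases eq_or_ne (m : ℝ) 0 with h | h
        · simp [h]
        · field_simp; rfl
      _ < 2 := (lt_log_iff_exp_lt two_pos).1 (by linarith [log_two_gt_d9])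
  linarith [Finset.sum_filter_add_sum_filter_not Finset.univ Finset.Nonempty
    fun S : Finset α ↦ (1 / (2 * m : ℝ)) ^ S.card]

lemma exists_forall_card_lt_ncard_preimage [Nonempty V] (A : Finset α → Set V)
    (𝒮 : Set (Finset α))
    (h : ∀ S ∈ 𝒮, S.Nonempty →
      2 * Fintype.card V * (S.card * log (4 * Fintype.card α)) ≤ Fintype.card ι * (A S).ncard) :
    ∃ ω : ι → V, ∀ S ∈ 𝒮, S.Nonempty → S.card < (ω ⁻¹' A S).ncard := by
  classical
  by_contra! hbad
  let F : Finset (Finset α) := {S | S.Nonempty ∧ S ∈ 𝒮}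
  let bad (S : Finset α) : Set (ι → V) := {ω | (ω ⁻¹' A S).ncard ≤ S.card}
  have card_bad (S : Finset α) (hS : S ∈ F) : ((bad S).ncard : ℝ) ≤
      (1 / (2 * Fintype.card α)) ^ S.card * Fintype.card V ^ Fintype.card ι := by
    obtain ⟨hne, hS⟩ : S.Nonempty ∧ S ∈ 𝒮 := by simpa [F] using hS
    have : Nonempty α := ⟨hne.choose⟩
    convert ncard_setOf_ncard_preimage_le_le_of_mul_log_le (by positivity) (h S hS hne) using 3
    field_simp
    norm_num
  have cover : Set.univ ⊆ ⋃ S ∈ F, bad S := fun ω _ ↦ by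
    obtain ⟨S, hS, hne, hle⟩ := hbad ω
    exact Set.mem_biUnion (Finset.mem_filter_univ .. |>.2 ⟨hne, hS⟩) hle
  have pow_pos : (0 : ℝ) < Fintype.card V ^ Fintype.card ι := by positivity
  refine lt_irrefl ((Fintype.card V : ℝ) ^ Fintype.card ι) ?_
  calc (Fintype.card V : ℝ) ^ Fintype.card ι
    _ = (Set.univ : Set (ι → V)).ncard := by simp [Set.ncard_univ]
    _ ≤ ∑ S ∈ F, ((bad S).ncard : ℝ) := by
      exact_mod_cast (Set.ncard_le_ncard cover).trans (F.set_ncard_biUnion_le bad)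
    _ ≤ (∑ S ∈ F, (1 / (2 * Fintype.card α : ℝ)) ^ S.card) *
          Fintype.card V ^ Fintype.card ι := by
      rw [Finset.sum_mul]; exact Finset.sum_le_sum card_bad
    _ ≤ (∑ S : Finset α with S.Nonempty, (1 / (2 * Fintype.card α : ℝ)) ^ S.card) *
          Fintype.card V ^ Fintype.card ι := by
      gcongr
      exact Finset.monotone_filter_right _ fun _ _ hS ↦ hS.1
    _ < Fintype.card V ^ Fintype.card ι :=
      mul_lt_of_lt_one_left pow_pos sum_nonempty_inv_two_mul_card_pow_card_lt_one

end RandomPlacement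

section Growth

lemma ncard_le_mul_ncard_of_subset_biUnion {α β : Type*} [Finite α] [Finite β] {T : Set β}
    {S : Set α} {f : α → Set β} {m : ℕ} (hT : T ⊆ ⋃ u ∈ S, f u) (hf : ∀ u ∈ S, (f u).ncard ≤ m) :
    T.ncard ≤ m * S.ncard := by
  obtain ⟨S, rfl⟩ := S.toFinite.exists_finset_coe
  calc T.ncard ≤ (⋃ u ∈ S, f u).ncard := Set.ncard_le_ncard hT
    _ ≤ ∑ u ∈ S, (f u).ncard := S.set_ncard_biUnion_le f
    _ ≤ S.card • m := Finset.sum_le_card_nsmul S _ m hf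
    _ = m * (S : Set α).ncard := by rw [Set.ncard_coe_finset, smul_eq_mul, mul_comm]

variable (G : SimpleGraph V)

lemma hGamma_nonneg [Fintype V] (γ : ℝ) : 0 ≤ hGamma G γ :=
  Real.sInf_nonneg <| by rintro x ⟨S, -, -, rfl⟩; positivity

lemma hGamma_mul_ncard_le [Fintype V] {γ : ℝ} {S : Set V}
    (hS : (S.ncard : ℝ) ≤ (Fintype.card V : ℝ) ^ (1 - γ)) :
    hGamma G γ * S.ncard ≤ (vertexBoundary G S).ncard := by
  rcases S.eq_empty_or_nonempty with rfl | hne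
  · simp
  · rw [← le_div_iff₀ (by exact_mod_cast (Set.ncard_pos).2 hne)]
    refine csInf_le ⟨0, ?_⟩ ⟨S, hne, hS, rfl⟩
    rintro x ⟨T, -, -, rfl⟩
    positivity

lemma min_le_ncard_iterate_closedNeighborhood [Fintype V] (γ : ℝ) (S : Set V) (r : ℕ) :
    min ((1 + hGamma G γ) ^ r * S.ncard) ((Fintype.card V : ℝ) ^ (1 - γ)) ≤
      ((closedNeighborhood G)^[r] S).ncard := by
  induction r with
  | zero => simp
  | succ r ih =>
    rw [Function.iterate_succ_apply', ncard_closedNeighborhood, Nat.cast_add]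
    set B := (closedNeighborhood G)^[r] S
    have hh := hGamma_nonneg G γ
    rcases le_total (B.ncard : ℝ) ((Fintype.card V : ℝ) ^ (1 - γ)) with hsmall | hlarge
    · have hexp := hGamma_mul_ncard_le G hsmall
      rcases min_le_iff.1 ih with hB | hB
      · refine min_le_of_left_le ?_
        calc (1 + hGamma G γ) ^ (r + 1) * S.ncard
          _ = (1 + hGamma G γ) * ((1 + hGamma G γ) ^ r * S.ncard) := by ring
          _ ≤ (1 + hGamma G γ) * B.ncard := by gcongr
          _ ≤ B.ncard + (vertexBoundary G B).ncard := by linarith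
      · exact min_le_of_right_le (hB.trans (by simp))
    · exact min_le_of_right_le (hlarge.trans (by simp))

variable {G} [Finite V] {d : ℕ}

lemma ncard_vertexBoundary_le (hdeg : ∀ v, (G.neighborSet v).ncard ≤ d) (S : Set V) :
    (vertexBoundary G S).ncard ≤ d * S.ncard :=
  ncard_le_mul_ncard_of_subset_biUnion (f := G.neighborSet)
    (fun _ ⟨_, _, hu, huv⟩ ↦ Set.mem_biUnion hu huv) fun _ _ ↦ hdeg _

/-- One neighbor of each `u ∈ ∂S` lies in `S`, leaving at most `d` of them to be reached anew. -/
lemma ncard_vertexBoundary_closedNeighborhood_le (hdeg : ∀ v, (G.neighborSet v).ncard ≤ d + 1)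
    (S : Set V) :
    (vertexBoundary G (closedNeighborhood G S)).ncard ≤ d * (vertexBoundary G S).ncard := by
  refine ncard_le_mul_ncard_of_subset_biUnion (f := fun u ↦ G.neighborSet u \ S) ?_ ?_
  · rintro v ⟨hv, u, hu | hu, huv⟩
    · exact absurd ((mem_closedNeighborhood G).2 ⟨u, hu, .inr huv⟩) hv
    · exact Set.mem_biUnion hu ⟨huv, fun hvS ↦ hv (.inl hvS)⟩
  · rintro u ⟨-, p, hp, hpu⟩
    have : (G.neighborSet u \ S).ncard < (G.neighborSet u).ncard :=
      Set.ncard_lt_ncard ⟨Set.sdiff_subset, fun hsub ↦ (hsub hpu.symm).2 hp⟩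
    exact Nat.lt_succ_iff.1 (this.trans_le (hdeg u))

lemma ncard_vertexBoundary_iterate_closedNeighborhood_le
    (hdeg : ∀ v, (G.neighborSet v).ncard ≤ d + 1) (S : Set V) (r : ℕ) :
    (vertexBoundary G ((closedNeighborhood G)^[r] S)).ncard ≤ (d + 1) * d ^ r * S.ncard := by
  induction r with
  | zero => simpa using ncard_vertexBoundary_le hdeg S
  | succ r ih =>
    rw [Function.iterate_succ_apply']
    calc _ ≤ d * (vertexBoundary G ((closedNeighborhood G)^[r] S)).ncard :=
          ncard_vertexBoundary_closedNeighborhood_le hdeg _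
      _ ≤ d * ((d + 1) * d ^ r * S.ncard) := by gcongr
      _ = (d + 1) * d ^ (r + 1) * S.ncard := by ring

lemma ncard_iterate_closedNeighborhood_le (hd : 2 ≤ d)
    (hdeg : ∀ v, (G.neighborSet v).ncard ≤ d + 1) (S : Set V) (r : ℕ) :
    ((closedNeighborhood G)^[r] S).ncard ≤ 3 * d ^ r * S.ncard := by
  suffices h : ((closedNeighborhood G)^[r] S).ncard + 2 * S.ncard ≤ 3 * d ^ r * S.ncard by lia
  induction r with
  | zero => simp; lia
  | succ r ih =>
    rw [Function.iterate_succ_apply', ncard_closedNeighborhood]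
    have hbdry := ncard_vertexBoundary_iterate_closedNeighborhood_le hdeg S r
    calc _ ≤ 3 * d ^ r * S.ncard + (d + 1) * d ^ r * S.ncard := by lia
      _ = (d + 4) * (d ^ r * S.ncard) := by ring
      _ ≤ (3 * d) * (d ^ r * S.ncard) := by gcongr; lia
      _ = 3 * d ^ (r + 1) * S.ncard := by ring

end Growth

section Bound

open Real

variable {G : SimpleGraph V} [Fintype V] {k r : ℕ}

lemma copsWin_of_mul_log_le [Nonempty V]
    (h : ∀ (x : V) (S : Finset V), (S : Set V) ⊆ (closedNeighborhood G)^[r] {x} →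
      2 * Fintype.card V * (S.card * log (4 * Fintype.card V)) ≤
        k * ((closedNeighborhood G)^[r] S).ncard) :
    CopsWin G k := by
  obtain ⟨ω, hω⟩ := exists_forall_card_lt_ncard_preimage (ι := Fin k)
    (fun S : Finset V ↦ (closedNeighborhood G)^[r] S)
    {S | ∃ x, (S : Set V) ⊆ (closedNeighborhood G)^[r] {x}}
    fun S ⟨x, hx⟩ _ ↦ by simpa using h x S hx
  refine copsWin_of_forall_card_le (r := r) ω fun x S hS ↦ ?_
  rcases S.eq_empty_or_nonempty with rfl | hne
  · simp
  · exact (hω S ⟨x, hS⟩ hne).le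

lemma copsWin_of_hGamma [Nonempty V] {d : ℕ} {γ : ℝ} (hd : 2 ≤ d)
    (hdeg : ∀ v, (G.neighborSet v).ncard ≤ d + 1)
    (hgrow : 2 * Fintype.card V * log (4 * Fintype.card V) ≤ k * (1 + hGamma G γ) ^ r)
    (hlarge : 6 * Fintype.card V * d ^ r * log (4 * Fintype.card V) ≤
      k * (Fintype.card V : ℝ) ^ (1 - γ)) :
    CopsWin G k := by
  refine copsWin_of_mul_log_le (r := r) fun x S hS ↦ ?_
  have hcard : (S.card : ℝ) ≤ 3 * d ^ r := by
    have := (Set.ncard_le_ncard hS).trans (ncard_iterate_closedNeighborhood_le hd hdeg {x} r)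
    rw [Set.ncard_coe_finset, Set.ncard_singleton, mul_one] at this
    exact_mod_cast this
  have hlower := min_le_ncard_iterate_closedNeighborhood G γ S r
  rw [Set.ncard_coe_finset] at hlower
  refine le_trans ?_ (mul_le_mul_of_nonneg_left hlower k.cast_nonneg)
  have hn : (1 : ℝ) ≤ Fintype.card V := by exact_mod_cast Fintype.card_pos
  have hlog : 0 ≤ log (4 * Fintype.card V) := log_nonneg (by linarith)
  set n := (Fintype.card V : ℝ)
  rw [mul_min_of_nonneg _ _ k.cast_nonneg, le_min_iff]
  constructor
  · calc 2 * n * (S.card * log (4 * n)) = 2 * n * log (4 * n) * S.card := by ring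
      _ ≤ k * (1 + hGamma G γ) ^ r * S.card := by gcongr
      _ = k * ((1 + hGamma G γ) ^ r * S.card) := by ring
  · calc 2 * n * (S.card * log (4 * n)) ≤ 2 * n * (3 * d ^ r * log (4 * n)) := by gcongr
      _ = 6 * n * d ^ r * log (4 * n) := by ring
      _ ≤ k * n ^ (1 - γ) := hlarge

lemma exists_pow_le_sqrt_and_rpow_logb_le {d b n : ℝ} (hd : 1 < d) (hb : 1 ≤ b) (hn : 1 ≤ n) :
    ∃ r : ℕ, d ^ r ≤ √n ∧ n ^ (1 / 2 * logb d b) ≤ b ^ (r + 1) := by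
  obtain ⟨r, hr, hr'⟩ := exists_nat_pow_near (one_le_sqrt.2 hn) hd
  refine ⟨r, hr, ?_⟩
  have hlog : 0 ≤ logb d b := logb_nonneg hd hb
  calc n ^ (1 / 2 * logb d b) = √n ^ logb d b := by
        rw [rpow_mul (by linarith), ← sqrt_eq_rpow]
    _ ≤ (d ^ (r + 1)) ^ logb d b := by gcongr
    _ = (d ^ logb d b) ^ (r + 1) := (rpow_pow_comm (by linarith) _ _).symm
    _ = b ^ (r + 1) := by rw [rpow_logb (by linarith) hd.ne' (by linarith)]

theorem copNumber_le_ceil_of_le_hGamma [Nonempty V] {Δ : ℕ} (hΔ : 3 ≤ Δ) {ε γ : ℝ} (hε0 : 0 ≤ ε)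
    (hγ : γ ≤ (1 / 2) * (1 - logb ((Δ : ℝ) - 1) (1 + ε)))
    (hdeg : ∀ v, (G.neighborSet v).ncard ≤ Δ) (hh : ε ≤ hGamma G γ) :
    copNumber G ≤ ⌈2 * (Δ + ε) * (Fintype.card V : ℝ) ^
      (1 - (1 / 2) * logb ((Δ : ℝ) - 1) (1 + ε)) * log (4 * Fintype.card V)⌉₊ := by
  obtain ⟨d, rfl⟩ : ∃ d, Δ = d + 1 := ⟨Δ - 1, by lia⟩
  have hd : 2 ≤ d := by lia
  have hd' : (2 : ℝ) ≤ d := by exact_mod_cast hd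
  push_cast at hγ ⊢
  rw [add_sub_cancel_right] at hγ ⊢
  have hn : (1 : ℝ) ≤ Fintype.card V := by exact_mod_cast Fintype.card_pos
  have hlog : 0 ≤ log (4 * Fintype.card V) := log_nonneg (by linarith)
  obtain ⟨r, hr, hr'⟩ := exists_pow_le_sqrt_and_rpow_logb_le (b := 1 + ε)
    (by linarith : 1 < (d : ℝ)) (by linarith) hn
  set n := (Fintype.card V : ℝ)
  set a := logb d (1 + ε)
  set k := ⌈2 * (d + 1 + ε) * n ^ (1 - 1 / 2 * a) * log (4 * n)⌉₊
  have hk : 2 * (d + 1 + ε) * n ^ (1 - 1 / 2 * a) * log (4 * n) ≤ k := Nat.le_ceil _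
  refine Nat.sInf_le (copsWin_of_hGamma (r := r) (γ := γ) hd hdeg ?_ ?_)
  · calc 2 * n * log (4 * n) = 2 * (n ^ (1 - 1 / 2 * a) * n ^ (1 / 2 * a)) * log (4 * n) := by
          rw [← rpow_add (by linarith), sub_add_cancel, rpow_one]
      _ = 2 * n ^ (1 - 1 / 2 * a) * log (4 * n) * n ^ (1 / 2 * a) := by ring
      _ ≤ 2 * n ^ (1 - 1 / 2 * a) * log (4 * n) * (1 + ε) ^ (r + 1) := by gcongr
      _ = 2 * (1 + ε) * n ^ (1 - 1 / 2 * a) * log (4 * n) * (1 + ε) ^ r := by ring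
      _ ≤ 2 * (d + 1 + ε) * n ^ (1 - 1 / 2 * a) * log (4 * n) * (1 + ε) ^ r := by gcongr; linarith
      _ ≤ k * (1 + hGamma G γ) ^ r := by gcongr
  · calc 6 * n * d ^ r * log (4 * n) ≤ 6 * n * √n * log (4 * n) := by gcongr
      _ = 6 * n ^ (1 + 1 / 2 : ℝ) * log (4 * n) := by
        rw [mul_assoc 6, sqrt_eq_rpow, rpow_add (by linarith), rpow_one]
      _ ≤ 6 * n ^ (1 - 1 / 2 * a + (1 - γ)) * log (4 * n) := by
        gcongr 6 * n ^ ?_ * log (4 * n)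
        linarith
      _ = 6 * n ^ (1 - 1 / 2 * a) * log (4 * n) * n ^ (1 - γ) := by
        rw [rpow_add (by linarith)]; ring
      _ ≤ 2 * (d + 1 + ε) * n ^ (1 - 1 / 2 * a) * log (4 * n) * n ^ (1 - γ) := by gcongr; linarith
      _ ≤ k * n ^ (1 - γ) := by gcongr

open Filter Asymptotics in
lemma eventually_ceil_mul_rpow_mul_log_le {b c : ℝ} (hbc : b < c) (hc : 0 < c) (C : ℝ) :
    ∀ᶠ n : ℕ in atTop, (⌈C * (n : ℝ) ^ b * log (4 * n)⌉₊ : ℝ) ≤ (n : ℝ) ^ c := by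
  have const_isLittleO (A : ℝ) {e : ℝ} (he : 0 < e) :
      (fun _ ↦ A) =o[atTop] fun x : ℝ ↦ x ^ e :=
    isLittleO_const_left.2 <| .inr <| tendsto_norm_atTop_atTop.comp (tendsto_rpow_atTop he)
  have log_isLittleO : (fun x ↦ log (4 * x)) =o[atTop] fun x : ℝ ↦ x ^ (c - b) := by
    refine ((const_isLittleO (log 4) (sub_pos.2 hbc)).add
      (isLittleO_log_rpow_atTop (sub_pos.2 hbc))).congr' ?_ .rfl
    filter_upwards [eventually_ne_atTop 0] with x hx
    rw [log_mul four_ne_zero hx]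
  have main_isLittleO : (fun x ↦ C * x ^ b * log (4 * x)) =o[atTop] fun x : ℝ ↦ x ^ c := by
    refine (((isBigO_refl (fun x : ℝ ↦ x ^ b) atTop).const_mul_left C).mul_isLittleO
      log_isLittleO).congr' .rfl ?_
    filter_upwards [eventually_gt_atTop 0] with x hx
    rw [← rpow_add hx, add_sub_cancel]
  have sum_le := (main_isLittleO.norm_left.add (const_isLittleO 1 hc)).bound one_pos
  filter_upwards [tendsto_natCast_atTop_atTop.eventually sum_le] with n hn
  calc (⌈C * (n : ℝ) ^ b * log (4 * n)⌉₊ : ℝ)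
    _ ≤ ⌈‖C * (n : ℝ) ^ b * log (4 * n)‖⌉₊ := by gcongr; exact le_norm_self _
    _ ≤ ‖C * (n : ℝ) ^ b * log (4 * n)‖ + 1 := (Nat.ceil_lt_add_one (norm_nonneg _)).le
    _ ≤ ‖‖C * (n : ℝ) ^ b * log (4 * n)‖ + 1‖ := le_norm_self _
    _ ≤ 1 * ‖(n : ℝ) ^ c‖ := hn
    _ = (n : ℝ) ^ c := by rw [one_mul, norm_of_nonneg (by positivity)]

theorem copNumber_le_of_hGamma_general {Δ : ℕ} (hΔ : 3 ≤ Δ) {ε γ : ℝ} (hε0 : 0 ≤ ε) (hγ0 : 0 ≤ γ)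
    (hγ : γ ≤ (1 / 2) * (1 - logb ((Δ : ℝ) - 1) (1 + ε))) {δ : ℝ} (hδ : 0 < δ) :
    ∃ n₀ : ℕ, ∀ (W : Type*) [Fintype W] (G : SimpleGraph W),
      (∀ v, (G.neighborSet v).ncard ≤ Δ) → n₀ ≤ Fintype.card W → ε ≤ hGamma G γ →
      (copNumber G : ℝ) ≤
        (Fintype.card W : ℝ) ^ (1 - (1 / 2) * logb ((Δ : ℝ) - 1) (1 + ε) + δ) := by
  obtain ⟨n₀, hn₀⟩ := Filter.eventually_atTop.1 <|
    (eventually_ceil_mul_rpow_mul_log_le (lt_add_of_pos_right _ hδ)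
      (by linarith : 0 < 1 - (1 / 2) * logb ((Δ : ℝ) - 1) (1 + ε) + δ) (2 * (Δ + ε))).and <|
    Filter.eventually_gt_atTop 0
  refine ⟨n₀, fun W _ G hdeg hn hh ↦ ?_⟩
  obtain ⟨hceil, hpos⟩ := hn₀ _ hn
  have := Fintype.card_pos_iff.1 hpos
  exact (Nat.cast_le.2 (copNumber_le_ceil_of_le_hGamma hΔ hε0 hγ hdeg hh)).trans hceil

end Bound

/-- Let `Δ ≥ 3`, `0 < ε ≤ Δ - 2` and
`0 < γ ≤ (1/2)(1 - log_{Δ-1}(1+ε))`.  Then for every `δ > 0` there is `n₀` such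
that every finite connected graph `G` with maximum degree at most `Δ`, order
`n ≥ n₀`, and `h_γ(G) ≥ ε` satisfies
`c(G) ≤ n ^ (1 - (1/2) log_{Δ-1}(1+ε) + δ)`. -/
theorem copNumber_le_of_hGamma (Δ : ℕ) (hΔ : 3 ≤ Δ) (ε γ : ℝ)
    (hε0 : 0 < ε) (hεΔ : ε ≤ (Δ : ℝ) - 2)
    (hγ0 : 0 < γ) (hγ : γ ≤ (1 / 2) * (1 - Real.logb ((Δ : ℝ) - 1) (1 + ε))) :
    ∀ δ : ℝ, 0 < δ → ∃ n₀ : ℕ, ∀ (W : Type) [Fintype W] (G : SimpleGraph W),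
      G.Connected → (∀ v : W, (G.neighborSet v).ncard ≤ Δ) →
      n₀ ≤ Fintype.card W → ε ≤ hGamma G γ →
      (copNumber G : ℝ) ≤
        (Fintype.card W : ℝ) ^ (1 - (1 / 2) * Real.logb ((Δ : ℝ) - 1) (1 + ε) + δ) := by
  intro δ hδ
  obtain ⟨n₀, hn₀⟩ := copNumber_le_of_hGamma_general hΔ hε0.le hγ0.le hγ hδ
  exact ⟨n₀, fun W _ G _ ↦ hn₀ W G⟩
end

section
/- Let Δ ≥ 3 be an integer and let ε be a real number with 0 < ε ≤ Δ − 2. Then for every real δ > 0 there exists an integer n₀ such that every finite connected graph G of maximum degree at most Δ, of order n ≥ n₀, and with isoperimetric number h(G) ≥ ε satisfies c(G) ≤ n^{1 − (1/2)·log_{Δ−1}(1+ε/Δ) + δ}. -/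
/-!
The game of cops and robbers on a (finite connected) simple graph `G`:
first the `k` cops choose starting vertices, then the robber chooses a starting
vertex (knowing the cops' positions); the players alternate turns (cops first),
each cop may stay or move to an adjacent vertex, and the robber may stay or move
to an adjacent vertex.  The cops win if at some moment a cop occupies the same
vertex as the robber.  The cop number is the least `k` for which the cops have
a winning strategy.
-/

variable {V : Type*}

/-- The edge boundary `δS` of a vertex set `S`: the set of edges of `G` with
exactly one endpoint in `S`. -/
def edgeBoundary (G : SimpleGraph V) (S : Set V) : Set (Sym2 V) :=
  {e | e ∈ G.edgeSet ∧ ∃ u v : V, e = s(u, v) ∧ u ∈ S ∧ v ∉ S}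

/-- The isoperimetric number `h(G)`: the minimum of `|δS| / |S|` over nonempty
vertex sets `S` with `|S| ≤ n/2`, where `n` is the order of `G`. -/
noncomputable def isoperimetricNumber [Fintype V] (G : SimpleGraph V) : ℝ :=
  sInf {x : ℝ | ∃ S : Set V, S.Nonempty ∧
    (S.ncard : ℝ) ≤ (Fintype.card V : ℝ) / 2 ∧
    x = ((edgeBoundary G S).ncard : ℝ) / (S.ncard : ℝ)}

/-!
Place `k` cops so that every set `A` of at most `2 Δ ^ r` vertices has at least `|A|` cops within
distance `r`; random cops do this with positive probability, since expansion makes the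
`r`-neighbourhood of `A` at least `(1 + ε / Δ) ^ r` times larger than `A`.  Wherever the robber
starts, Hall's theorem assigns to each vertex of the `r`-ball around him a cop of its own within
distance `r`.  After `r` rounds in which each cop walks to her vertex, the whole ball is occupied
and the robber, who is still in it, is caught.  The neighbourhood growth is available as long as
`2 Δ ^ r * (1 + ε / Δ) ^ r ≤ n / 2`, so `r` is taken to be about `log_{Δ + ε} n`.  About
`n log n / (1 + ε / Δ) ^ r` cops then suffice, that is, `n ^ (1 - log_{Δ + ε} (1 + ε / Δ) + o(1))`,
and `Δ + ε ≤ (Δ - 1) ^ 2`.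
-/

section CopsAndRobbers

open Finset

variable {G : SimpleGraph V} {k m : ℕ}

/-! ### Distances and neighbourhoods -/

theorem eq_or_exists_adj_of_edist_le_succ {u w : V} (h : G.edist u w ≤ (m + 1 : ℕ)) :
    u = w ∨ ∃ v, G.Adj u v ∧ G.edist v w ≤ m := by
  obtain ⟨p, hp⟩ := SimpleGraph.exists_walk_of_edist_ne_top
    (ne_top_of_le_ne_top (ENat.natCast_ne_top _) h)
  rw [← hp, Nat.cast_le] at h
  cases p with
  | nil => exact Or.inl rfl
  | cons hadj q =>
    refine Or.inr ⟨_, hadj, (SimpleGraph.edist_le q).trans ?_⟩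
    exact_mod_cast Nat.le_of_succ_le_succ h

theorem edist_le_succ_iff_exists_edist_le_one {u w : V} :
    G.edist u w ≤ (m + 1 : ℕ) ↔ ∃ v, G.edist u v ≤ 1 ∧ G.edist v w ≤ m := by
  constructor
  · intro h
    rcases eq_or_exists_adj_of_edist_le_succ h with rfl | ⟨v, hadj, hvw⟩
    · exact ⟨u, by simp, by simp⟩
    · exact ⟨v, (SimpleGraph.edist_eq_one_iff_adj.2 hadj).le, hvw⟩
  · rintro ⟨v, huv, hvw⟩
    calc G.edist u w ≤ G.edist u v + G.edist v w := SimpleGraph.edist_triangle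
      _ ≤ 1 + m := add_le_add huv hvw
      _ = (m + 1 : ℕ) := by push_cast; exact add_comm _ _

theorem eq_or_adj_iff_edist_le_one {u v : V} : v = u ∨ G.Adj u v ↔ G.edist u v ≤ 1 := by
  rw [SimpleGraph.edist_le_one_iff_adj_or_eq, or_comm, eq_comm]

open scoped Classical in
/-- The closed `m`-neighbourhood of a vertex set `A`: the vertices at distance at most `m` from
`A`.  For `A = {v}` it is the closed ball of radius `m` around `v`. -/
noncomputable def closedThickening [Fintype V] (G : SimpleGraph V) (m : ℕ) (A : Finset V) :
    Finset V :=
  {x | ∃ a ∈ A, G.edist x a ≤ m}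

section Thickening

variable [Fintype V] {A : Finset V}

theorem mem_closedThickening {x : V} :
    x ∈ closedThickening G m A ↔ ∃ a ∈ A, G.edist x a ≤ m := by
  simp [closedThickening]

theorem mem_closedThickening_singleton {u v : V} :
    u ∈ closedThickening G m {v} ↔ G.edist v u ≤ m := by
  simp [mem_closedThickening, SimpleGraph.edist_comm]

theorem subset_closedThickening : A ⊆ closedThickening G m A :=
  fun x hx => mem_closedThickening.2 ⟨x, hx, by simp⟩

theorem closedThickening_succ :
    closedThickening G (m + 1) A = closedThickening G 1 (closedThickening G m A) := by
  ext x
  simp only [mem_closedThickening, edist_le_succ_iff_exists_edist_le_one, Nat.cast_one]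
  constructor
  · rintro ⟨a, ha, y, hxy, hya⟩
    exact ⟨y, ⟨a, ha, hya⟩, hxy⟩
  · rintro ⟨y, ⟨a, ha, hya⟩, hxy⟩
    exact ⟨a, ha, y, hxy, hya⟩

variable {Δ : ℕ}

theorem card_closedThickening_succ_le (hd : ∀ v, (G.neighborSet v).ncard ≤ Δ) :
    #(closedThickening G (m + 1) A) ≤ #A + #(closedThickening G m A) * Δ := by
  classical
  have hcover : closedThickening G (m + 1) A ⊆
      A ∪ (closedThickening G m A).biUnion fun y => (G.neighborSet y).toFinset := by
    intro x hx
    obtain ⟨a, ha, hxa⟩ := mem_closedThickening.1 hx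
    rcases eq_or_exists_adj_of_edist_le_succ hxa with rfl | ⟨y, hxy, hya⟩
    · exact mem_union_left _ ha
    · refine mem_union_right _ (mem_biUnion.2 ⟨y, mem_closedThickening.2 ⟨a, ha, hya⟩, ?_⟩)
      simpa using hxy.symm
  refine (card_le_card hcover).trans ((card_union_le _ _).trans (Nat.add_le_add_left ?_ _))
  refine card_biUnion_le_card_mul _ _ _ fun y _ => ?_
  rw [← Set.ncard_eq_toFinset_card']
  exact hd y

theorem card_closedThickening_add_card_le (hΔ : 2 ≤ Δ)
    (hd : ∀ v, (G.neighborSet v).ncard ≤ Δ) (m : ℕ) (A : Finset V) :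
    #(closedThickening G m A) + #A ≤ 2 * Δ ^ m * #A := by
  induction m with
  | zero =>
    have : closedThickening G 0 A = A := by ext x; simp [mem_closedThickening]
    rw [this, pow_zero]
    omega
  | succ m ih =>
    have hstep := card_closedThickening_succ_le (m := m) (A := A) hd
    rw [pow_succ]
    nlinarith

end Thickening

/-! ### The game -/

/-- The `k` cops standing at `c`, to move against the robber at `r`, can force a capture within
`m` rounds: a bounded-horizon form of winning, defined by recursion on the horizon. -/
def CanCatchIn (G : SimpleGraph V) : ℕ → (Fin k → V) → V → Prop
  | 0, c, r => ∃ i, c i = r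
  | m + 1, c, r => ∃ c' : Fin k → V, (∀ i, c' i = c i ∨ G.Adj (c i) (c' i)) ∧
      ∀ r', (r' = r ∨ G.Adj r r') → CanCatchIn G m c' r'

theorem exists_move_canCatchIn_lt (G : SimpleGraph V) (c : Fin k → V) (r : V) :
    ∃ c' : Fin k → V, (∀ i, c' i = c i ∨ G.Adj (c i) (c' i)) ∧
      ∀ m, CanCatchIn G m c r → (∃ i, c i = r) ∨
        ∃ m' < m, ∀ r', (r' = r ∨ G.Adj r r') → CanCatchIn G m' c' r' := by
  classical
  by_cases hcatch : ∃ m, CanCatchIn G m c r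
  · have hspec := Nat.find_spec hcatch
    have hmin : ∀ m, CanCatchIn G m c r → Nat.find hcatch ≤ m := fun m => Nat.find_min' hcatch
    generalize Nat.find hcatch = horizon at hspec hmin
    cases horizon with
    | zero => exact ⟨c, fun i => Or.inl rfl, fun _ _ => Or.inl hspec⟩
    | succ m' =>
      obtain ⟨c', hmove, hnext⟩ := hspec
      exact ⟨c', hmove, fun m hm => Or.inr ⟨m', hmin m hm, hnext⟩⟩
  · exact ⟨c, fun i => Or.inl rfl, fun m hm => absurd ⟨m, hm⟩ hcatch⟩

/-- A positional strategy cannot count rounds; the cops instead always play towards the least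
horizon in which they can still win, which therefore decreases. -/
theorem copsWin_of_forall_exists_canCatchIn (c₀ : Fin k → V)
    (h : ∀ r, ∃ m, CanCatchIn G m c₀ r) : CopsWin G k := by
  choose move hvalid hdecr using exists_move_canCatchIn_lt (k := k) G
  let CS : CopStrategy G k := ⟨c₀, move, hvalid⟩
  refine ⟨CS, fun RS => ?_⟩
  have capture : ∀ m n, CanCatchIn G m (play CS RS n).1 (play CS RS n).2 →
      ∃ n, ∃ i, (play CS RS n).1 i = (play CS RS n).2 := by
    intro m
    induction m using Nat.strong_induction_on with
    | _ m ih =>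
      intro n hn
      rcases hdecr _ _ m hn with hcaught | ⟨m', hlt, hnext⟩
      · exact ⟨n, hcaught⟩
      · exact ih m' hlt (n + 1) (hnext _ (RS.valid _ _))
  obtain ⟨m, hm⟩ := h (RS.init c₀)
  obtain ⟨n, hn⟩ := capture m 0 hm
  exact ⟨n, Or.inl hn⟩

theorem canCatchIn_of_injOn {c : Fin k → V} {r : V} (g : V → Fin k)
    (hinj : Set.InjOn g {u | G.edist r u ≤ m})
    (hg : ∀ u, G.edist r u ≤ m → G.edist (c (g u)) u ≤ m) : CanCatchIn G m c r := by
  induction m generalizing c r with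
  | zero => exact ⟨g r, by simpa using hg r (by simp)⟩
  | succ m ih =>
    have approach : ∀ i, ∃ y, (y = c i ∨ G.Adj (c i) y) ∧
        ∀ u, G.edist r u ≤ (m + 1 : ℕ) → g u = i → G.edist y u ≤ m := by
      intro i
      by_cases hi : ∃ u, G.edist r u ≤ (m + 1 : ℕ) ∧ g u = i
      · obtain ⟨u, hu, rfl⟩ := hi
        obtain ⟨y, hy, hyu⟩ := edist_le_succ_iff_exists_edist_le_one.1 (hg u hu)
        refine ⟨y, eq_or_adj_iff_edist_le_one.2 hy, fun u' hu' heq => ?_⟩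
        rwa [hinj hu' hu heq]
      · exact ⟨c i, Or.inl rfl, fun u hu heq => absurd ⟨u, hu, heq⟩ hi⟩
    choose c' hmove hnear using approach
    refine ⟨c', hmove, fun r' hr' => ?_⟩
    have hball : ∀ u, G.edist r' u ≤ m → G.edist r u ≤ (m + 1 : ℕ) := fun u hu =>
      edist_le_succ_iff_exists_edist_le_one.2 ⟨r', eq_or_adj_iff_edist_le_one.1 hr', hu⟩
    exact ih (hinj.mono hball) fun u hu => hnear _ u (hball u hu) rfl

theorem copsWin_of_forall_card_le_card_filter [Fintype V] [DecidableEq V] (c : Fin k → V)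
    (h : ∀ v, ∀ A ⊆ closedThickening G m {v}, #A ≤ #{i | c i ∈ closedThickening G m A}) :
    CopsWin G k := by
  classical
  refine copsWin_of_forall_exists_canCatchIn c fun v => ⟨m, ?_⟩
  let B := closedThickening G m {v}
  obtain ⟨f, hf, hnear⟩ := (Fintype.all_card_le_filter_rel_iff_exists_injective
    fun (u : B) i => G.edist (c i) u ≤ m).1 fun s => by
      have hs := h v (s.map (Function.Embedding.subtype _)) (map_subtype_subset s)
      simpa [mem_closedThickening] using hs
  have hcenter : v ∈ B := mem_closedThickening_singleton.2 (by simp)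
  refine canCatchIn_of_injOn (fun u => if hu : u ∈ B then f ⟨u, hu⟩ else f ⟨v, hcenter⟩) ?_ ?_
  · intro u hu u' hu' heq
    have hu : u ∈ B := mem_closedThickening_singleton.2 hu
    have hu' : u' ∈ B := mem_closedThickening_singleton.2 hu'
    simp only [hu, hu', dif_pos] at heq
    exact congrArg Subtype.val (hf heq)
  · intro u hu
    have hu : u ∈ B := mem_closedThickening_singleton.2 hu
    simpa only [hu, dif_pos] using hnear ⟨u, hu⟩

/-! ### Random placements -/

section Placement

variable [Fintype V]

theorem sum_one_half_pow_card_filter_mem [DecidableEq V] (T : Finset V) (k : ℕ) :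
    ∑ c : Fin k → V, (1 / 2 : ℝ) ^ #{i | c i ∈ T} = (Fintype.card V - #T / 2 : ℝ) ^ k := by
  have hvertex : ∑ v : V, (if v ∈ T then (1 / 2 : ℝ) else 1) = Fintype.card V - #T / 2 := by
    have hcompl := card_compl_add_card T
    rw [← hcompl, sum_ite, filter_notMem_eq_sdiff, ← compl_eq_univ_sdiff]
    simp only [filter_univ_mem, sum_const, nsmul_eq_mul, mul_one]
    push_cast
    ring
  rw [← hvertex, Fintype.sum_pow]
  simp [prod_ite]

/-- First-moment method: `h` bounds the mean of `∑ j ∈ F, 2 ^ (a j - hits j)`, which is at least `1`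
as soon as some `j` has fewer than `a j` hits. -/
theorem exists_forall_le_card_filter_mem [DecidableEq V] {ι : Type*} (F : Finset ι)
    (T : ι → Finset V) (a : ι → ℕ)
    (h : ∑ j ∈ F, 2 ^ a j * (Fintype.card V - #(T j) / 2 : ℝ) ^ k < (Fintype.card V : ℝ) ^ k) :
    ∃ c : Fin k → V, ∀ j ∈ F, a j ≤ #{i | c i ∈ T j} := by
  by_contra! hfail
  refine h.not_ge ?_
  have hweight (c : Fin k → V) : 1 ≤ ∑ j ∈ F, 2 ^ a j * (1 / 2 : ℝ) ^ #{i | c i ∈ T j} := by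
    obtain ⟨j, hj, hlt⟩ := hfail c
    refine le_trans ?_ (single_le_sum (fun _ _ => by positivity) hj)
    rw [one_div, inv_pow, ← div_eq_mul_inv, one_le_div (by positivity)]
    exact pow_le_pow_right₀ one_le_two hlt.le
  calc (Fintype.card V : ℝ) ^ k = ∑ _ : Fin k → V, (1 : ℝ) := by simp
    _ ≤ ∑ c : Fin k → V, ∑ j ∈ F, 2 ^ a j * (1 / 2 : ℝ) ^ #{i | c i ∈ T j} :=
      sum_le_sum fun c _ => hweight c
    _ = ∑ j ∈ F, 2 ^ a j * (Fintype.card V - #(T j) / 2 : ℝ) ^ k := by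
      rw [sum_comm]
      simp only [← mul_sum, sum_one_half_pow_card_filter_mem]

theorem sum_nonempty_pow_card_lt_one [Nonempty V] :
    ∑ A : Finset V with A.Nonempty, (1 / (2 * Fintype.card V) : ℝ) ^ #A < 1 := by
  have : (0 : ℝ) < Fintype.card V := by exact_mod_cast Fintype.card_pos
  set x : ℝ := 1 / (2 * Fintype.card V) with hx
  have hall : ∑ A : Finset V, x ^ #A = 1 + ∑ A : Finset V with A.Nonempty, x ^ #A := by
    have hempty : ({A | ¬A.Nonempty} : Finset (Finset V)) = {∅} := by ext; simp
    rw [← sum_filter_add_sum_filter_not univ Finset.Nonempty, hempty, sum_singleton, card_empty,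
      pow_zero, add_comm]
  have hbinomial : ∑ A : Finset V, x ^ #A = (x + 1) ^ Fintype.card V := by
    simpa using sum_pow_mul_eq_add_pow x 1 (univ : Finset V)
  have hexp_half : Real.exp (1 / 2) < 2 := by
    have := Real.add_one_lt_exp (x := -(1 / 2)) (by norm_num)
    rw [Real.exp_neg, lt_inv_comm₀ (by norm_num) (Real.exp_pos _)] at this
    linarith
  have hpow : (x + 1) ^ Fintype.card V ≤ Real.exp (1 / 2) := by
    calc (x + 1) ^ Fintype.card V ≤ Real.exp x ^ Fintype.card V := by
          gcongr
          exact Real.add_one_le_exp x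
      _ = Real.exp (1 / 2) := by
          rw [← Real.exp_nat_mul, hx]
          congr 1
          field_simp
  linarith

theorem two_pow_mul_sub_half_pow_le [Nonempty V] {a : ℕ} {T : Finset V}
    (h : 2 * Fintype.card V * Real.log (4 * Fintype.card V) * a ≤ k * #T) :
    2 ^ a * (Fintype.card V - #T / 2 : ℝ) ^ k ≤
      (Fintype.card V : ℝ) ^ k * (1 / (2 * Fintype.card V)) ^ a := by
  set n : ℝ := (Fintype.card V : ℝ) with hn
  have hn0 : 0 < n := by rw [hn]; exact_mod_cast Fintype.card_pos
  have hT : (#T : ℝ) ≤ n := by rw [hn]; exact_mod_cast card_le_univ T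
  have hbase : n - #T / 2 ≤ n * Real.exp (-(#T / (2 * n))) := by
    calc n - #T / 2 = n * (-(#T / (2 * n)) + 1) := by field_simp; ring
      _ ≤ _ := by gcongr; exact Real.add_one_le_exp _
  have hexponent : Real.log (4 * n) * a ≤ k * #T / (2 * n) := by
    rw [le_div_iff₀ (by positivity)]
    linarith
  have hpow : (n - #T / 2) ^ k ≤ n ^ k * (1 / (4 * n)) ^ a := by
    calc (n - #T / 2) ^ k ≤ (n * Real.exp (-(#T / (2 * n)))) ^ k :=
          pow_le_pow_left₀ (by linarith) hbase k
      _ = n ^ k * Real.exp (-(k * #T / (2 * n))) := by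
          rw [mul_pow, ← Real.exp_nat_mul]; congr 2; ring
      _ ≤ n ^ k * Real.exp (a * -Real.log (4 * n)) := by gcongr; linarith
      _ = n ^ k * (1 / (4 * n)) ^ a := by
          rw [Real.exp_nat_mul, Real.exp_neg, Real.exp_log (by positivity), one_div]
  calc 2 ^ a * (n - #T / 2) ^ k ≤ 2 ^ a * (n ^ k * (1 / (4 * n)) ^ a) := by gcongr
    _ = n ^ k * (1 / (2 * n)) ^ a := by
        rw [mul_left_comm, ← mul_pow]; congr 2; field_simp; norm_num

theorem exists_placement_of_mul_log_mul_card_le [Nonempty V] [DecidableEq V]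
    (F : Finset (Finset V)) (T : Finset V → Finset V)
    (hT : ∀ A ∈ F, 2 * Fintype.card V * Real.log (4 * Fintype.card V) * #A ≤ k * #(T A)) :
    ∃ c : Fin k → V, ∀ A ∈ F, #A ≤ #{i | c i ∈ T A} := by
  have : (0 : ℝ) < Fintype.card V := by exact_mod_cast Fintype.card_pos
  have hmean : ∑ A ∈ F with A.Nonempty, 2 ^ #A * (Fintype.card V - #(T A) / 2 : ℝ) ^ k <
      (Fintype.card V : ℝ) ^ k := by
    calc ∑ A ∈ F with A.Nonempty, 2 ^ #A * (Fintype.card V - #(T A) / 2 : ℝ) ^ k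
        ≤ ∑ A ∈ F with A.Nonempty,
            (Fintype.card V : ℝ) ^ k * (1 / (2 * Fintype.card V)) ^ #A :=
          sum_le_sum fun A hA => two_pow_mul_sub_half_pow_le (hT A (mem_filter.1 hA).1)
      _ ≤ ∑ A : Finset V with A.Nonempty,
            (Fintype.card V : ℝ) ^ k * (1 / (2 * Fintype.card V)) ^ #A :=
          sum_le_sum_of_subset_of_nonneg (filter_subset_filter _ (subset_univ F))
            fun _ _ _ => by positivity
      _ < (Fintype.card V : ℝ) ^ k := by
          rw [← mul_sum]
          exact mul_lt_of_lt_one_right (by positivity) sum_nonempty_pow_card_lt_one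
  obtain ⟨c, hc⟩ := exists_forall_le_card_filter_mem _ T card hmean
  refine ⟨c, fun A hA => ?_⟩
  rcases A.eq_empty_or_nonempty with rfl | hne
  · simp
  · exact hc A (mem_filter.2 ⟨hA, hne⟩)

end Placement

/-! ### Expansion -/

/-- Vertex expansion by a factor `β`: a set of at most half of the vertices has a closed
neighbourhood at least `β` times its own size.  This is the only consequence of a large
isoperimetric number that the pursuit uses. -/
def IsVertexExpander [Fintype V] (G : SimpleGraph V) (β : ℝ) : Prop :=
  ∀ S : Finset V, (#S : ℝ) ≤ Fintype.card V / 2 → β * #S ≤ #(closedThickening G 1 S)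

section Expansion

variable [Fintype V] {Δ : ℕ} {β ε : ℝ}

theorem isoperimetricNumber_mul_ncard_le {S : Set V}
    (hS : (S.ncard : ℝ) ≤ Fintype.card V / 2) :
    isoperimetricNumber G * S.ncard ≤ (edgeBoundary G S).ncard := by
  rcases S.eq_empty_or_nonempty with rfl | hne
  · simp
  · have hpos : (0 : ℝ) < S.ncard := by exact_mod_cast (Set.ncard_pos S.toFinite).2 hne
    rw [← le_div_iff₀ hpos]
    refine csInf_le ⟨0, ?_⟩ ⟨S, hne, hS, rfl⟩
    rintro _ ⟨S', -, -, rfl⟩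
    positivity

theorem ncard_edgeBoundary_le [DecidableEq V] (hd : ∀ v, (G.neighborSet v).ncard ≤ Δ)
    (S : Finset V) :
    (edgeBoundary G (S : Set V)).ncard ≤ #(closedThickening G 1 S \ S) * Δ := by
  classical
  have hcover : edgeBoundary G (S : Set V) ⊆ ((closedThickening G 1 S \ S).biUnion
      fun v => (G.neighborSet v).toFinset.image fun u => s(u, v) : Finset (Sym2 V)) := by
    rintro _ ⟨hadj, u, v, rfl, hu, hv⟩
    rw [SimpleGraph.mem_edgeSet] at hadj
    have hvS : v ∈ closedThickening G 1 S :=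
      mem_closedThickening.2 ⟨u, hu, (SimpleGraph.edist_eq_one_iff_adj.2 hadj.symm).le⟩
    simp only [coe_biUnion, Set.mem_iUnion, mem_coe, mem_image, Set.mem_toFinset, mem_sdiff]
    exact ⟨v, ⟨hvS, hv⟩, u, hadj.symm, rfl⟩
  refine (Set.ncard_le_ncard hcover (finite_toSet _)).trans ?_
  rw [Set.ncard_coe_finset]
  refine card_biUnion_le_card_mul _ _ _ fun v _ => card_image_le.trans ?_
  rw [← Set.ncard_eq_toFinset_card']
  exact hd v

theorem isVertexExpander_of_le_isoperimetricNumber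
    (hd : ∀ v, (G.neighborSet v).ncard ≤ Δ) (hε : ε ≤ isoperimetricNumber G) :
    IsVertexExpander G (1 + ε / Δ) := by
  classical
  intro S hS
  have hboundary : ε * #S ≤ #(closedThickening G 1 S \ S) * Δ := by
    calc ε * #S ≤ isoperimetricNumber G * #S := by gcongr
      _ ≤ (edgeBoundary G (S : Set V)).ncard := by
        simpa using isoperimetricNumber_mul_ncard_le (G := G) (S := (S : Set V)) (by simpa using hS)
      _ ≤ #(closedThickening G 1 S \ S) * Δ := by exact_mod_cast ncard_edgeBoundary_le hd S
  have hsplit : (#(closedThickening G 1 S \ S) : ℝ) + #S = #(closedThickening G 1 S) := by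
    exact_mod_cast card_sdiff_add_card_eq_card subset_closedThickening
  calc (1 + ε / Δ) * #S = ε * #S / Δ + #S := by ring
    _ ≤ #(closedThickening G 1 S \ S) + #S := by
      gcongr
      exact div_le_of_le_mul₀ (by positivity) (by positivity) hboundary
    _ = #(closedThickening G 1 S) := hsplit

namespace IsVertexExpander

theorem min_le_card_closedThickening (hG : IsVertexExpander G β) (hβ : 0 ≤ β) (m : ℕ)
    (A : Finset V) :
    min (β ^ m * #A) (Fintype.card V / 2) ≤ #(closedThickening G m A) := by
  induction m with
  | zero => simpa using Or.inl (card_le_card subset_closedThickening)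
  | succ m ih =>
    rw [closedThickening_succ]
    set S := closedThickening G m A
    by_cases hhalf : (Fintype.card V / 2 : ℝ) ≤ #S
    · calc min (β ^ (m + 1) * #A) (Fintype.card V / 2) ≤ Fintype.card V / 2 := min_le_right _ _
        _ ≤ #S := hhalf
        _ ≤ #(closedThickening G 1 S) := by exact_mod_cast card_le_card subset_closedThickening
    · have hgrow : β ^ m * #A ≤ #S := (min_le_iff.1 ih).resolve_right hhalf
      calc min (β ^ (m + 1) * #A) (Fintype.card V / 2) ≤ β ^ (m + 1) * #A := min_le_left _ _
        _ = β * (β ^ m * #A) := by ring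
        _ ≤ β * #S := by gcongr
        _ ≤ #(closedThickening G 1 S) := hG S (not_le.1 hhalf).le

theorem copNumber_le [Nonempty V] (hG : IsVertexExpander G β) (hβ : 0 ≤ β) (hΔ : 2 ≤ Δ)
    (hd : ∀ v, (G.neighborSet v).ncard ≤ Δ) {r : ℕ} (hr : 4 * (Δ * β) ^ r ≤ Fintype.card V)
    (hk : 2 * Fintype.card V * Real.log (4 * Fintype.card V) ≤ k * β ^ r) :
    copNumber G ≤ k := by
  classical
  have hgrowth (A : Finset V) (hA : #A ≤ 2 * Δ ^ r) :
      β ^ r * #A ≤ #(closedThickening G r A) := by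
    have hhalf : β ^ r * #A ≤ Fintype.card V / 2 := by
      calc β ^ r * #A ≤ β ^ r * (2 * Δ ^ r) := by gcongr; exact_mod_cast hA
        _ = 2 * (Δ * β) ^ r := by rw [mul_pow]; ring
        _ ≤ Fintype.card V / 2 := by linarith
    exact (min_eq_left hhalf).symm.trans_le (hG.min_le_card_closedThickening hβ r A)
  obtain ⟨c, hc⟩ := exists_placement_of_mul_log_mul_card_le (k := k)
    {A | #A ≤ 2 * Δ ^ r} (closedThickening G r) fun A hA => by
      calc 2 * Fintype.card V * Real.log (4 * Fintype.card V) * #A ≤ k * β ^ r * #A := by gcongr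
        _ = k * (β ^ r * #A) := mul_assoc _ _ _
        _ ≤ k * #(closedThickening G r A) := by gcongr; exact hgrowth A (mem_filter_univ A |>.1 hA)
  refine Nat.sInf_le (copsWin_of_forall_card_le_card_filter (m := r) c fun v A hA => hc A ?_)
  have hball := card_closedThickening_add_card_le hΔ hd r {v}
  rw [card_singleton] at hball
  have := card_le_card hA
  exact (mem_filter_univ A).2 (by omega)

end IsVertexExpander

end Expansion

/-! ### Asymptotics -/

section Asymptotics

open Filter Asymptotics

variable {b l x β δ : ℝ}

theorem exists_pow_le_and_rpow_logb_le (hb : 1 < b) (hβ : 1 ≤ β) (hx : 1 ≤ x) :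
    ∃ r : ℕ, b ^ r ≤ x ∧ x ^ Real.logb b β ≤ β ^ (r + 1) := by
  obtain ⟨r, hle, hlt⟩ := exists_nat_pow_near hx hb
  have hb0 : 0 < b := one_pos.trans hb
  refine ⟨r, hle, ?_⟩
  calc x ^ Real.logb b β ≤ (b ^ (r + 1)) ^ Real.logb b β :=
        Real.rpow_le_rpow (by linarith) hlt.le (Real.logb_nonneg hb hβ)
    _ = (b ^ Real.logb b β) ^ (r + 1) := (Real.rpow_pow_comm hb0.le _ _).symm
    _ = β ^ (r + 1) := by rw [Real.rpow_logb hb0 hb.ne' (by linarith)]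

theorem eventually_mul_log_mul_rpow_add_one_le (C : ℝ) (hl : l ≤ 1) (hδ : 0 < δ) :
    ∀ᶠ x : ℝ in atTop, C * Real.log (4 * x) * x ^ (1 - l) + 1 ≤ x ^ (1 - l + δ) := by
  have hconst (a : ℝ) {s : ℝ} (hs : 0 < s) : (fun _ => a) =o[atTop] fun x : ℝ => x ^ s :=
    (isLittleO_const_left.2 <| Or.inr <|
      tendsto_norm_atTop_atTop.comp (tendsto_rpow_atTop hs))
  have hlog : (fun x => Real.log (4 * x)) =o[atTop] fun x : ℝ => x ^ δ := by
    refine ((hconst (Real.log 4) hδ).add (isLittleO_log_rpow_atTop hδ)).congr' ?_ .rfl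
    filter_upwards [eventually_gt_atTop 0] with x hx
    exact (Real.log_mul four_ne_zero hx.ne').symm
  have hprod : (fun x => C * Real.log (4 * x) * x ^ (1 - l)) =o[atTop]
      fun x : ℝ => x ^ (1 - l + δ) := by
    refine ((hlog.const_mul_left C).mul_isBigO (isBigO_refl (fun x : ℝ => x ^ (1 - l)) _)).congr'
      .rfl ?_
    filter_upwards [eventually_gt_atTop 0] with x hx
    rw [← Real.rpow_add hx, add_comm]
  filter_upwards [(hprod.add (hconst 1 (by linarith))).bound one_pos, eventually_gt_atTop 0]
    with x hbound hx
  rw [one_mul, Real.norm_of_nonneg (Real.rpow_nonneg hx.le _)] at hbound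
  exact (le_abs_self _).trans hbound

theorem half_logb_sub_one_le_logb_add {Δ ε : ℝ} (hΔ : 3 ≤ Δ) (hε : 0 ≤ ε) (hεΔ : ε ≤ Δ - 2) :
    1 / 2 * Real.logb (Δ - 1) (1 + ε / Δ) ≤ Real.logb (Δ + ε) (1 + ε / Δ) := by
  have hbase : Δ + ε ≤ (Δ - 1) ^ 2 := by nlinarith
  have hlog_base : Real.log (Δ + ε) ≤ 2 * Real.log (Δ - 1) := by
    simpa using Real.log_le_log (by linarith) hbase
  have hlog_pos : 0 < Real.log (Δ + ε) := Real.log_pos (by linarith)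
  have hlog_nonneg : 0 ≤ Real.log (1 + ε / Δ) :=
    Real.log_nonneg (le_add_of_nonneg_right (by positivity))
  calc 1 / 2 * Real.logb (Δ - 1) (1 + ε / Δ)
      = Real.log (1 + ε / Δ) / (2 * Real.log (Δ - 1)) := by rw [Real.logb]; ring
    _ ≤ Real.logb (Δ + ε) (1 + ε / Δ) := by rw [Real.logb]; gcongr

end Asymptotics

/-! ### Cop numbers of large expanders -/

theorem IsVertexExpander.copNumber_le_mul_log_mul_rpow_add_one [Fintype V] {Δ : ℕ} {β : ℝ}
    (hG : IsVertexExpander G β) (hΔ : 2 ≤ Δ) (hβ : 1 ≤ β)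
    (hd : ∀ v, (G.neighborSet v).ncard ≤ Δ) (hn : 4 ≤ Fintype.card V) :
    (copNumber G : ℝ) ≤ 2 * β * 4 ^ Real.logb (Δ * β) β * Real.log (4 * Fintype.card V) *
      (Fintype.card V : ℝ) ^ (1 - Real.logb (Δ * β) β) + 1 := by
  have : Nonempty V := Fintype.card_pos_iff.1 (by omega)
  have hΔ' : (2 : ℝ) ≤ Δ := by exact_mod_cast hΔ
  have hn' : (4 : ℝ) ≤ Fintype.card V := by exact_mod_cast hn
  set n : ℝ := (Fintype.card V : ℝ)
  set l := Real.logb (Δ * β) β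
  obtain ⟨r, hr, hrpow⟩ : ∃ r : ℕ, (Δ * β) ^ r ≤ n / 4 ∧ (n / 4) ^ l ≤ β ^ (r + 1) :=
    exists_pow_le_and_rpow_logb_le (by nlinarith) hβ (by linarith)
  have hlog : 0 ≤ Real.log (4 * n) := Real.log_nonneg (by linarith)
  have hβr : 0 < β ^ r := by positivity
  have hinv : (β ^ r)⁻¹ ≤ β * (4 ^ l * n ^ (-l)) := by
    calc (β ^ r)⁻¹ = β * (β ^ (r + 1))⁻¹ := by rw [pow_succ]; field_simp
      _ ≤ β * ((n / 4) ^ l)⁻¹ := by gcongr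
      _ = β * (4 ^ l * n ^ (-l)) := by
        rw [Real.div_rpow (by linarith) (by norm_num), Real.rpow_neg (by linarith), inv_div,
          div_eq_mul_inv]
  calc (copNumber G : ℝ) ≤ ⌈2 * n * Real.log (4 * n) * (β ^ r)⁻¹⌉₊ := by
        refine Nat.cast_le.2 (hG.copNumber_le (by linarith) hΔ hd (r := r) (by linarith) ?_)
        rw [← div_le_iff₀ hβr, div_eq_mul_inv]
        exact Nat.le_ceil _
    _ ≤ 2 * n * Real.log (4 * n) * (β ^ r)⁻¹ + 1 := (Nat.ceil_lt_add_one (by positivity)).le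
    _ ≤ 2 * n * Real.log (4 * n) * (β * (4 ^ l * n ^ (-l))) + 1 := by gcongr
    _ = 2 * β * 4 ^ l * Real.log (4 * n) * n ^ (1 - l) + 1 := by
      rw [sub_eq_add_neg, Real.rpow_add (by linarith), Real.rpow_one]
      ring

theorem exists_forall_copNumber_le_rpow_of_isVertexExpander {Δ : ℕ} {β δ : ℝ} (hΔ : 2 ≤ Δ)
    (hβ : 1 ≤ β) (hδ : 0 < δ) :
    ∃ n₀ : ℕ, ∀ (W : Type*) [Fintype W] (G : SimpleGraph W),
      (∀ v : W, (G.neighborSet v).ncard ≤ Δ) → n₀ ≤ Fintype.card W → IsVertexExpander G β →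
      (copNumber G : ℝ) ≤ (Fintype.card W : ℝ) ^ (1 - Real.logb (Δ * β) β + δ) := by
  have hΔ' : (2 : ℝ) ≤ Δ := by exact_mod_cast hΔ
  have hexponent : Real.logb (Δ * β) β ≤ 1 := by
    rw [Real.logb_le_iff_le_rpow (by nlinarith) (by linarith), Real.rpow_one]
    nlinarith
  obtain ⟨n₀, hn₀⟩ := Filter.eventually_atTop.1 <| tendsto_natCast_atTop_atTop.eventually <|
    eventually_mul_log_mul_rpow_add_one_le (2 * β * 4 ^ Real.logb (Δ * β) β) hexponent hδ
  refine ⟨max 4 n₀, fun W _ G hd hn hG => ?_⟩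
  exact (hG.copNumber_le_mul_log_mul_rpow_add_one hΔ hβ hd (le_of_max_le_left hn)).trans
    (hn₀ _ (le_of_max_le_right hn))

end CopsAndRobbers

theorem copNumber_le_of_isoperimetric_general (Δ : ℕ) (hΔ : 2 ≤ Δ) (ε : ℝ) (hε : 0 ≤ ε) (δ : ℝ)
    (hδ : 0 < δ) :
    ∃ n₀ : ℕ, ∀ (W : Type*) [Fintype W] (G : SimpleGraph W),
      (∀ v : W, (G.neighborSet v).ncard ≤ Δ) →
      n₀ ≤ Fintype.card W → ε ≤ isoperimetricNumber G →
      (copNumber G : ℝ) ≤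
        (Fintype.card W : ℝ) ^ (1 - Real.logb (Δ + ε) (1 + ε / Δ) + δ) := by
  have hβ : 1 ≤ 1 + ε / Δ := le_add_of_nonneg_right (by positivity)
  have hbase : (Δ : ℝ) * (1 + ε / Δ) = Δ + ε := by field_simp
  obtain ⟨n₀, hn₀⟩ := exists_forall_copNumber_le_rpow_of_isVertexExpander hΔ hβ hδ
  refine ⟨n₀, fun W _ G hd hn hG => ?_⟩
  rw [← hbase]
  exact hn₀ W G hd hn (isVertexExpander_of_le_isoperimetricNumber hd hG)

/-- Let `Δ ≥ 3` and `0 < ε ≤ Δ - 2`.  Then for every `δ > 0`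
there is `n₀` such that every finite connected graph `G` with maximum degree at
most `Δ`, order `n ≥ n₀`, and isoperimetric number `h(G) ≥ ε` satisfies
`c(G) ≤ n ^ (1 - (1/2) log_{Δ-1}(1 + ε/Δ) + δ)`. -/
theorem copNumber_le_of_isoperimetric (Δ : ℕ) (hΔ : 3 ≤ Δ) (ε : ℝ)
    (hε0 : 0 < ε) (hεΔ : ε ≤ (Δ : ℝ) - 2) :
    ∀ δ : ℝ, 0 < δ → ∃ n₀ : ℕ, ∀ (W : Type) [Fintype W] (G : SimpleGraph W),
      G.Connected → (∀ v : W, (G.neighborSet v).ncard ≤ Δ) →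
      n₀ ≤ Fintype.card W → ε ≤ isoperimetricNumber G →
      (copNumber G : ℝ) ≤
        (Fintype.card W : ℝ) ^ (1 - (1 / 2) * Real.logb ((Δ : ℝ) - 1) (1 + ε / Δ) + δ) := by
  intro δ hδ
  obtain ⟨n₀, hn₀⟩ := copNumber_le_of_isoperimetric_general Δ (by omega) ε hε0.le δ hδ
  refine ⟨max 1 n₀, fun W _ G _ hd hn hG => (hn₀ W G hd (le_of_max_le_right hn) hG).trans ?_⟩
  have hcard : (1 : ℝ) ≤ Fintype.card W := by exact_mod_cast le_of_max_le_left hn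
  gcongr
  exact half_logb_sub_one_le_logb_add (by exact_mod_cast hΔ) hε0.le hεΔ
end

section
/- Let t ≥ 1 be an integer and let G be a finite digraph that is t-dispersed. Then for all vertices v and x with dist(v,x) ≤ t, there is a unique geodesic directed path from v to x. -/
variable {V : Type*}

/-- `IsDiwalk G a b P` says that `P : Fin (m+1) → V` is a directed walk in the
digraph `G` from `a` to `b` (with `m` edges). -/
def IsDiwalk (G : V → V → Prop) (a b : V) {m : ℕ} (P : Fin (m + 1) → V) : Prop :=
  P 0 = a ∧ P (Fin.last m) = b ∧ ∀ i : Fin m, G (P i.castSucc) (P i.succ)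

/-- The distance `dist(a, b)` in a digraph: the length of a shortest directed
path from `a` to `b` (`⊤` if there is none). -/
noncomputable def ddist (G : V → V → Prop) (a b : V) : ℕ∞ :=
  sInf {n : ℕ∞ | ∃ (m : ℕ) (P : Fin (m + 1) → V), n = (m : ℕ∞) ∧ IsDiwalk G a b P}

/-- A `(v, u)`-trap in a digraph `G`: two internally disjoint geodesic directed
paths, a `(v, x)`-path `P` with at least one edge and a `(u, x)`-path `Q` with
`‖Q‖ ≤ ‖P‖`; if `u = v` both paths must have at least two edges.  The vertex
`x` is the tip and `‖P‖` is the length of the trap. -/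
structure Trap (G : V → V → Prop) (v u : V) where
  /-- the length of the trap, i.e. the number of edges of `P` -/
  lenP : ℕ
  /-- the number of edges of `Q` -/
  lenQ : ℕ
  /-- the tip of the trap -/
  x : V
  P : Fin (lenP + 1) → V
  Q : Fin (lenQ + 1) → V
  one_le_lenP : 1 ≤ lenP
  lenQ_le : lenQ ≤ lenP
  hPinj : Function.Injective P
  hQinj : Function.Injective Q
  hP : IsDiwalk G v x P
  hQ : IsDiwalk G u x Q
  hPgeo : ddist G v x = (lenP : ℕ∞)
  hQgeo : ddist G u x = (lenQ : ℕ∞)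
  disj : ∀ (i : Fin (lenP + 1)) (j : Fin (lenQ + 1)), P i = Q j →
    (i = 0 ∨ i = Fin.last lenP) ∧ (j = 0 ∨ j = Fin.last lenQ)
  eq_case : u = v → 2 ≤ lenP ∧ 2 ≤ lenQ

/-- The vertex set of a trap. -/
def Trap.verts {G : V → V → Prop} {v u : V} (T : Trap G v u) : Set V :=
  Set.range T.P ∪ Set.range T.Q

/-- The (directed) edge set of a trap. -/
def Trap.edges {G : V → V → Prop} {v u : V} (T : Trap G v u) : Set (V × V) :=
  (Set.range fun i : Fin T.lenP => (T.P i.castSucc, T.P i.succ)) ∪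
  (Set.range fun i : Fin T.lenQ => (T.Q i.castSucc, T.Q i.succ))

/-- Two `(v, u)`-traps are internally disjoint if they share no vertices apart
from `v` and `u`, and share no edges. -/
def Trap.InternallyDisjoint {G : V → V → Prop} {v u : V} (T₁ T₂ : Trap G v u) : Prop :=
  T₁.verts ∩ T₂.verts ⊆ {v, u} ∧ Disjoint T₁.edges T₂.edges

/-- The trap distance `ρ*(v, u)`: the minimum length of a `(v, u)`-trap
(`⊤` if there is none). -/
noncomputable def trapDist (G : V → V → Prop) (v u : V) : ℕ∞ :=
  sInf {n : ℕ∞ | ∃ T : Trap G v u, n = (T.lenP : ℕ∞)}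

/-- A digraph `G` is `t`-dispersed if (1) for all distinct vertices `v, u`
there are no two internally disjoint `(v, u)`-traps each of length at most `t`,
and (2) whenever `uv` is an edge of `G` there is no `(v, u)`-trap of length at
most `t`. -/
def Dispersed (G : V → V → Prop) (t : ℕ) : Prop :=
  (∀ v u : V, v ≠ u → ¬∃ T₁ T₂ : Trap G v u,
      T₁.lenP ≤ t ∧ T₂.lenP ≤ t ∧ T₁.InternallyDisjoint T₂) ∧
  (∀ u v : V, G u v → ¬∃ T : Trap G v u, T.lenP ≤ t)

/-!
Two geodesics with the same ends can only meet at equal indices, since the index of a vertex is its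
distance from the start. If two distinct geodesics meet at an interior vertex, then cutting both
there leaves a shorter pair of distinct geodesics with common ends. A pair that cannot be cut is
internally disjoint, and completing each of its members by the trivial path at the common end `x`
gives two internally disjoint `(v, x)`-traps.
-/

/-- A geodesic directed walk: its length is the distance between its ends. Injectivity is not
required, as it follows (`IsGeodesic.injective`). -/
def IsGeodesic (G : V → V → Prop) (a b : V) {m : ℕ} (P : Fin (m + 1) → V) : Prop :=
  IsDiwalk G a b P ∧ ddist G a b = m

section

variable {G : V → V → Prop} {a b c v x : V} {m n : ℕ}

theorem IsDiwalk.ddist_le {P : Fin (m + 1) → V} (hP : IsDiwalk G a b P) : ddist G a b ≤ m :=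
  sInf_le ⟨m, P, rfl, hP⟩

theorem isDiwalk_const (G : V → V → Prop) (a : V) : IsDiwalk G a a fun _ : Fin 1 => a :=
  ⟨rfl, rfl, fun i => i.elim0⟩

theorem ddist_self (G : V → V → Prop) (a : V) : ddist G a a = 0 :=
  nonpos_iff_eq_zero.1 (isDiwalk_const G a).ddist_le

theorem exists_isGeodesic_of_ddist_ne_top (h : ddist G a b ≠ ⊤) :
    ∃ (m : ℕ) (P : Fin (m + 1) → V), IsGeodesic G a b P := by
  have hwalks : {n : ℕ∞ | ∃ (m : ℕ) (P : Fin (m + 1) → V), n = m ∧ IsDiwalk G a b P}.Nonempty := by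
    by_contra hempty
    exact h (by rw [ddist, Set.not_nonempty_iff_eq_empty.1 hempty, sInf_empty])
  obtain ⟨m, P, hm, hP⟩ := csInf_mem hwalks
  exact ⟨m, P, hP, hm⟩

namespace IsDiwalk

variable {P : Fin (m + 1) → V}

theorem snoc (hP : IsDiwalk G a b P) (hbc : G b c) :
    IsDiwalk G a c (Fin.snoc P c : Fin (m + 1 + 1) → V) := by
  obtain ⟨rfl, rfl, hadj⟩ := hP
  refine ⟨Fin.snoc_castSucc (α := fun _ => V) c P 0, Fin.snoc_last (α := fun _ => V) c P,
    fun i => ?_⟩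
  cases i using Fin.lastCases with
  | last => simpa using hbc
  | cast i => simpa only [← Fin.castSucc_succ, Fin.snoc_castSucc] using hadj i

theorem take (hP : IsDiwalk G a b P) (i : Fin (m + 1)) :
    IsDiwalk G a (P i) fun k : Fin (i + 1) => P (k.castLE i.isLt) :=
  ⟨hP.1, rfl, fun k => hP.2.2 ⟨k, by omega⟩⟩

theorem drop (hP : IsDiwalk G a b P) (i : Fin (m + 1)) :
    IsDiwalk G (P i) b fun k : Fin (m - i + 1) => P ⟨i + k, by omega⟩ := by
  refine ⟨rfl, ?_, fun k => hP.2.2 ⟨i + k, by omega⟩⟩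
  simpa only [Fin.val_last, Nat.add_sub_cancel' i.is_le, Fin.last] using hP.2.1

end IsDiwalk

theorem ddist_le_ddist_add_one (hbc : G b c) : ddist G a c ≤ ddist G a b + 1 := by
  by_cases h : ddist G a b = ⊤
  · simp only [h, top_add, le_top]
  obtain ⟨m, P, hP, hm⟩ := exists_isGeodesic_of_ddist_ne_top h
  rw [hm]
  exact_mod_cast (hP.snoc hbc).ddist_le

theorem ddist_triangle (G : V → V → Prop) (a b c : V) :
    ddist G a c ≤ ddist G a b + ddist G b c := by
  by_cases h : ddist G b c = ⊤
  · simp only [h, add_top, le_top]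
  obtain ⟨n, P, ⟨hP0, hPn, hadj⟩, hn⟩ := exists_isGeodesic_of_ddist_ne_top h
  have hprefix (i : Fin (n + 1)) : ddist G a (P i) ≤ ddist G a b + (i : ℕ) := by
    induction i using Fin.induction with
    | zero => simp [hP0]
    | succ i ih =>
      calc ddist G a (P i.succ) ≤ ddist G a (P i.castSucc) + 1 := ddist_le_ddist_add_one (hadj i)
        _ ≤ ddist G a b + (i : ℕ) + 1 := by gcongr; exact ih
        _ = ddist G a b + (i.succ : ℕ) := by rw [Fin.val_succ, Nat.cast_succ, add_assoc]
  simpa only [hPn, hn, Fin.val_last] using hprefix (Fin.last n)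

namespace IsGeodesic

variable {P Q : Fin (m + 1) → V}

theorem ddist_apply (hP : IsGeodesic G a b P) (i : Fin (m + 1)) :
    ddist G a (P i) = (i : ℕ) ∧ ddist G (P i) b = (m - i : ℕ) := by
  have hstart := (hP.1.take i).ddist_le
  have hend := (hP.1.drop i).ddist_le
  have htotal := hP.2 ▸ ddist_triangle G a (P i) b
  generalize ddist G a (P i) = p at *
  generalize ddist G (P i) b = q at *
  lift p to ℕ using ne_top_of_le_ne_top (ENat.natCast_ne_top _) hstart
  lift q to ℕ using ne_top_of_le_ne_top (ENat.natCast_ne_top _) hend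
  norm_cast at *
  omega

theorem take (hP : IsGeodesic G a b P) (i : Fin (m + 1)) :
    IsGeodesic G a (P i) fun k : Fin (i + 1) => P (k.castLE i.isLt) :=
  ⟨hP.1.take i, (hP.ddist_apply i).1⟩

theorem drop (hP : IsGeodesic G a b P) (i : Fin (m + 1)) :
    IsGeodesic G (P i) b fun k : Fin (m - i + 1) => P ⟨i + k, by omega⟩ :=
  ⟨hP.1.drop i, (hP.ddist_apply i).2⟩

theorem val_eq_of_apply_eq {R : Fin (n + 1) → V} (hP : IsGeodesic G a b P)
    (hR : IsGeodesic G a c R) {i : Fin (m + 1)} {j : Fin (n + 1)} (h : P i = R j) :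
    (i : ℕ) = j := by
  have hij : ((i : ℕ) : ℕ∞) = (j : ℕ) := by rw [← (hP.ddist_apply i).1, h, (hR.ddist_apply j).1]
  exact_mod_cast hij

theorem injective (hP : IsGeodesic G a b P) : Function.Injective P :=
  fun _ _ h => Fin.ext (hP.val_eq_of_apply_eq hP h)

theorem ne (hP : IsGeodesic G a b P) (hm : 1 ≤ m) : a ≠ b := by
  rintro rfl
  have hzero : (m : ℕ∞) = 0 := by rw [← hP.2, ddist_self]
  norm_cast at hzero
  omega

/-- The trap whose first path is the geodesic `P` and whose second path is the trivial path at the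
end of `P`. -/
def trap (hP : IsGeodesic G v x P) (hm : 1 ≤ m) : Trap G v x where
  lenP := m
  lenQ := 0
  x := x
  P := P
  Q := fun _ => x
  one_le_lenP := hm
  lenQ_le := m.zero_le
  hPinj := hP.injective
  hQinj := Function.injective_of_subsingleton (α := Fin 1) _
  hP := hP.1
  hQ := isDiwalk_const G x
  hPgeo := hP.2
  hQgeo := ddist_self G x
  disj _ j h :=
    ⟨.inr (hP.injective (h.trans hP.1.2.1.symm)), .inl (Subsingleton.elim (α := Fin 1) j 0)⟩
  eq_case h := absurd h.symm (hP.ne hm)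

theorem trap_verts (hP : IsGeodesic G v x P) (hm : 1 ≤ m) :
    (hP.trap hm).verts = Set.range P := by
  refine Set.union_eq_left.2 ?_
  rintro _ ⟨_, rfl⟩
  exact ⟨Fin.last m, hP.1.2.1⟩

theorem trap_edges (hP : IsGeodesic G v x P) (hm : 1 ≤ m) :
    (hP.trap hm).edges = Set.range fun i : Fin m => (P i.castSucc, P i.succ) := by
  refine Set.union_eq_left.2 ?_
  rintro _ ⟨i, rfl⟩
  exact i.elim0

theorem internallyDisjoint_trap (hP : IsGeodesic G v x P) (hQ : IsGeodesic G v x Q) (hm : 2 ≤ m)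
    (hne : ∀ i, i ≠ 0 → i ≠ Fin.last m → P i ≠ Q i) :
    (hP.trap (one_le_two.trans hm)).InternallyDisjoint (hQ.trap (one_le_two.trans hm)) := by
  have hends {i : Fin (m + 1)} (h : P i = Q i) : i = 0 ∨ i = Fin.last m := by
    by_contra! hi
    exact hne i hi.1 hi.2 h
  rw [Trap.InternallyDisjoint, trap_verts, trap_verts, trap_edges, trap_edges]
  constructor
  · rintro _ ⟨⟨i, rfl⟩, j, hji⟩
    obtain rfl : j = i := Fin.ext (hQ.val_eq_of_apply_eq hP hji)
    rcases hends hji.symm with rfl | rfl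
    exacts [.inl hP.1.1, .inr hP.1.2.1]
  · rw [Set.disjoint_left]
    rintro _ ⟨i, rfl⟩ ⟨j, hji⟩
    obtain ⟨htail, hhead⟩ := Prod.mk.inj hji
    obtain rfl : j = i := Fin.ext (hQ.val_eq_of_apply_eq hP htail)
    have htail_ends := hends htail.symm
    have hhead_ends := hends hhead.symm
    simp only [Fin.ext_iff, Fin.val_castSucc, Fin.val_succ, Fin.val_zero, Fin.val_last] at *
    omega

end IsGeodesic

theorem IsDiwalk.two_le_of_ne {P Q : Fin (m + 1) → V} (hP : IsDiwalk G a b P)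
    (hQ : IsDiwalk G a b Q) (hPQ : P ≠ Q) : 2 ≤ m := by
  obtain ⟨i, hi⟩ := Function.ne_iff.1 hPQ
  have hzero : i ≠ 0 := fun h => hi (by rw [h, hP.1, hQ.1])
  have hlast : i ≠ Fin.last m := fun h => hi (by rw [h, hP.2.1, hQ.2.1])
  simp only [ne_eq, Fin.ext_iff, Fin.val_zero, Fin.val_last] at hzero hlast
  omega

theorem eq_of_take_eq_of_drop_eq {P Q : Fin (m + 1) → V} (i : Fin (m + 1))
    (htake : (fun k : Fin (i + 1) => P (k.castLE i.isLt)) = fun k => Q (k.castLE i.isLt))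
    (hdrop : (fun k : Fin (m - i + 1) => P ⟨i + k, by omega⟩) =
      fun k : Fin (m - i + 1) => Q ⟨i + k, by omega⟩) :
    P = Q := by
  funext k
  rcases le_total k i with hki | hik
  · exact congrFun htake ⟨k, Nat.lt_succ_of_le hki⟩
  · simpa only [Nat.add_sub_cancel' (Fin.le_def.1 hik)] using congrFun hdrop ⟨k - i, by omega⟩

theorem IsGeodesic.exists_internallyDisjoint_traps_of_ne {P Q : Fin (m + 1) → V}
    (hP : IsGeodesic G v x P) (hQ : IsGeodesic G v x Q) (hPQ : P ≠ Q) :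
    ∃ a b, a ≠ b ∧ ∃ T₁ T₂ : Trap G a b,
      T₁.lenP ≤ m ∧ T₂.lenP ≤ m ∧ T₁.InternallyDisjoint T₂ := by
  induction m using Nat.strong_induction_on generalizing v x with
  | _ m ih =>
    have hm : 2 ≤ m := hP.1.two_le_of_ne hQ.1 hPQ
    by_cases hmeet : ∃ i, i ≠ 0 ∧ i ≠ Fin.last m ∧ P i = Q i
    · obtain ⟨i, hi_ne_zero, hi_ne_last, hi⟩ := hmeet
      have hi_pos : 0 < (i : ℕ) := Fin.pos_iff_ne_zero.2 hi_ne_zero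
      have hi_lt : (i : ℕ) < m := Fin.lt_last_iff_ne_last.2 hi_ne_last
      have hpiece : ∃ l < m, ∃ (a b : V) (P' Q' : Fin (l + 1) → V),
          IsGeodesic G a b P' ∧ IsGeodesic G a b Q' ∧ P' ≠ Q' := by
        by_contra! heq
        exact hPQ (eq_of_take_eq_of_drop_eq i
          (heq _ hi_lt _ _ _ _ (hP.take i) (hi ▸ hQ.take i))
          (heq _ (by omega) _ _ _ _ (hP.drop i) (hi ▸ hQ.drop i)))
      obtain ⟨l, hl, _, _, P', Q', hP', hQ', hne⟩ := hpiece
      obtain ⟨a, b, hab, T₁, T₂, h₁, h₂, hdisj⟩ := ih l hl hP' hQ' hne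
      exact ⟨a, b, hab, T₁, T₂, h₁.trans hl.le, h₂.trans hl.le, hdisj⟩
    · push Not at hmeet
      exact ⟨v, x, hP.ne (one_le_two.trans hm), _, _, le_rfl, le_rfl,
        hP.internallyDisjoint_trap hQ hm hmeet⟩

end

theorem unique_geodesic_of_dispersed_general (G : V → V → Prop) (t : ℕ)
    (hdisp : ∀ v u : V, v ≠ u → ¬∃ T₁ T₂ : Trap G v u,
      T₁.lenP ≤ t ∧ T₂.lenP ≤ t ∧ T₁.InternallyDisjoint T₂)
    (v x : V) (hvx : ddist G v x ≤ (t : ℕ∞)) :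
    (∃ (m : ℕ) (P : Fin (m + 1) → V),
        Function.Injective P ∧ IsDiwalk G v x P ∧ ddist G v x = (m : ℕ∞)) ∧
    ∀ (m : ℕ) (P Q : Fin (m + 1) → V),
      IsDiwalk G v x P → ddist G v x = (m : ℕ∞) → IsDiwalk G v x Q → P = Q := by
  constructor
  · obtain ⟨m, P, hP⟩ :=
      exists_isGeodesic_of_ddist_ne_top (ne_top_of_le_ne_top (ENat.natCast_ne_top t) hvx)
    exact ⟨m, P, hP.injective, hP⟩
  · intro m P Q hP hm hQ
    have hmt : m ≤ t := by exact_mod_cast hm ▸ hvx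
    by_contra hPQ
    obtain ⟨a, b, hab, T₁, T₂, h₁, h₂, hdisj⟩ :=
      IsGeodesic.exists_internallyDisjoint_traps_of_ne ⟨hP, hm⟩ ⟨hQ, hm⟩ hPQ
    exact hdisp a b hab ⟨T₁, T₂, h₁.trans hmt, h₂.trans hmt, hdisj⟩

/-- If `t ≥ 1`, `G` is a finite `t`-dispersed digraph and
`dist(v, x) ≤ t`, then there is a unique geodesic directed path from `v` to
`x`. -/
theorem unique_geodesic_of_dispersed [Fintype V] (G : V → V → Prop)
    (t : ℕ) (ht : 1 ≤ t) (hdisp : Dispersed G t)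
    (v x : V) (hvx : ddist G v x ≤ (t : ℕ∞)) :
    (∃ (m : ℕ) (P : Fin (m + 1) → V),
        Function.Injective P ∧ IsDiwalk G v x P ∧ ddist G v x = (m : ℕ∞)) ∧
    ∀ (m : ℕ) (P Q : Fin (m + 1) → V),
      Function.Injective P → IsDiwalk G v x P → ddist G v x = (m : ℕ∞) →
      Function.Injective Q → IsDiwalk G v x Q → P = Q :=
  have ⟨hex, huniq⟩ := unique_geodesic_of_dispersed_general G t hdisp.1 v x hvx
  ⟨hex, fun m P Q _ hP hm _ hQ => huniq m P Q hP hm hQ⟩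
end
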